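/- arXiv:1702.04917 — 2 statements merged into one kernel-verified Lean document; each statement's English description precedes it below -/
import Mathlib

section
/- Let Σ be a structured-sparsity-in-levels model with J ≥ 2 levels in a Hilbert space H, and let f := f_w be the weighted group norm in levels with the adapted weights w_j = 1/√k_j. Suppose the continuous linear operator A : H → F satisfies the RIP on Σ−Σ with constant δ < 1/√(2+J). Then for every ε ≥ 0, every x ∈ H, and every e ∈ F with ‖e‖_F ≤ ε, any minimizer x* of f(z) over z ∈ H subject to ‖Az − (Ax+e)‖_F ≤ ε satisfies ‖x* − x‖_H ≤ C·(‖e‖_F + ε) + D·d_f(x,Σ), where C := (1+√(1+J))·√(1+δ)/(1 − δ√(2+J)) and D := 2√2·(1 + √(1+δ)·C). -/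
noncomputable section
open scoped ENNReal NNReal Pointwise RealInnerProductSpace
open Filter Set Classical MeasureTheory ProbabilityTheory

/-- The secant set `Σ - Σ` of a model set. -/
def secantSet {H : Type*} [NormedAddCommGroup H] (S : Set H) : Set H :=
  {u | ∃ x ∈ S, ∃ y ∈ S, u = x - y}

/-- The normalized secant set of a model set. -/
def normSecant {H : Type*} [NormedAddCommGroup H] [NormedSpace ℝ H] (S : Set H) : Set H :=
  {z | ∃ y ∈ secantSet S, y ≠ 0 ∧ z = ‖y‖⁻¹ • y}

/-- The restricted isometry property of `A` on the secant set `Σ - Σ`, with constant `δ`. -/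
def SatisfiesRIP {𝕜 : Type*} [RCLike 𝕜] {H F : Type*} [NormedAddCommGroup H]
    [NormedSpace 𝕜 H] [NormedAddCommGroup F] [NormedSpace 𝕜 F]
    (A : H →L[𝕜] F) (S : Set H) (δ : ℝ) : Prop :=
  ∀ x ∈ secantSet S, (1 - δ) * ‖x‖ ^ 2 ≤ ‖A x‖ ^ 2 ∧ ‖A x‖ ^ 2 ≤ (1 + δ) * ‖x‖ ^ 2

/-- The restriction `x_g` of `x` to the group of coordinates `g`. -/
def groupProj {H : Type*} [NormedAddCommGroup H] [InnerProductSpace ℝ H] {I : Type*}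
    (e : I → H) (g : Finset I) (x : H) : H :=
  ∑ i ∈ g, ⟪x, e i⟫ • e i

/-- The restriction `x_T` of `x` to a set of groups `T`. -/
def groupRestrict {H : Type*} [NormedAddCommGroup H] [InnerProductSpace ℝ H] {I : Type*}
    (e : I → H) (T : Finset (Finset I)) (x : H) : H :=
  ∑ g ∈ T, groupProj e g x

/-- The `k`-group-sparse model `Σ_k` associated to the group collection `G`. -/
def kGroupSparse {H : Type*} [NormedAddCommGroup H] [InnerProductSpace ℝ H] {I : Type*}
    (e : I → H) (G : Finset (Finset I)) (k : ℕ) : Set H :=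
  {x | ∃ T ⊆ G, T.card ≤ k ∧ x = groupRestrict e T x}

/-- The structured-sparsity-in-levels model: sums of one `k_j`-group-sparse vector
per level `j`. -/
def sparsityInLevels {H : Type*} [NormedAddCommGroup H] [InnerProductSpace ℝ H] {I : Type*}
    (e : I → H) {J : ℕ} (G : Fin J → Finset (Finset I)) (k : Fin J → ℕ) : Set H :=
  {x | ∃ c : Fin J → H, (∀ j, c j ∈ kGroupSparse e (G j) (k j)) ∧ x = ∑ j, c j}

/-- The weighted group norm in levels `f_w(x) = Σ_j w_j Σ_{g ∈ G_j} ‖x_g‖`, extended by `+∞`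
off the span of the coordinates covered by the groups. -/
def fwLevels {H : Type*} [NormedAddCommGroup H] [InnerProductSpace ℝ H] {I : Type*}
    (e : I → H) {J : ℕ} (G : Fin J → Finset (Finset I)) (w : Fin J → ℝ) (x : H) : ℝ≥0∞ :=
  if x ∈ Submodule.span ℝ (e '' {i : I | ∃ j, ∃ g ∈ G j, i ∈ g})
  then ENNReal.ofReal (∑ j, w j * ∑ g ∈ G j, ‖groupProj e g x‖)
  else ⊤

/-- The (symmetrized) modeling-error distance `d_f(x, Σ)`. -/
def distF {H : Type*} [NormedAddCommGroup H] (f : H → ℝ≥0∞) (S : Set H) (x : H) : ℝ≥0∞ :=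
  ⨅ x' ∈ S, (f (x - x') + f (x' - x)) / 2

/-!
Split `h = x* - x` into the part `y` on the `k_j` largest groups of each level and the tail `t`.
A capped simplex `{θ ∈ [0, 1]^n | ∑ θ ≤ k}` has only `0`-`1` extreme points, so `t` is an average of
model vectors whose norm `R` is controlled by the weighted group norms of `y` and `t`. The polarized
RIP is affine in the model vector, hence extends to such averages: if `R ≤ √(1 + J) ‖y‖`, then
`‖y + t‖ ≤ C ‖A (y + t)‖`. Minimality of `x*` gives `f(t) ≤ f(y) + 2 d_f(x, Σ)`; shrinking `t` by
`min 1 (f(y) / f(t))` brings `R` below the threshold, and what is cut off is of size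
`2√2 d_f(x, Σ)`.
-/

section CappedSimplex

open scoped Topology

theorem sum_eq_card_of_eq_zero_or_one {ι : Type*} {s : Finset ι} {θ : ι → ℝ}
    (hθ : ∀ i ∈ s, θ i = 0 ∨ θ i = 1) : ∑ i ∈ s, θ i = (s.filter (θ · = 1)).card := by
  rw [← Finset.sum_boole]
  refine Finset.sum_congr rfl fun i hi => ?_
  rcases hθ i hi with h | h <;> simp [h]

variable {ι : Type*} [Fintype ι]

/-- The polytope of `[0, 1]`-valued weights of total mass at most `k`. -/
def cappedSimplex (ι : Type*) [Fintype ι] (k : ℕ) : Set (ι → ℝ) :=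
  Icc 0 1 ∩ {θ | ∑ i, θ i ≤ k}

theorem mem_cappedSimplex {k : ℕ} {θ : ι → ℝ} :
    θ ∈ cappedSimplex ι k ↔ (∀ i, 0 ≤ θ i ∧ θ i ≤ 1) ∧ ∑ i, θ i ≤ k := by
  simp only [cappedSimplex, mem_inter_iff, mem_Icc, Pi.le_def, Pi.zero_apply, Pi.one_apply,
    forall_and, mem_ofPred_eq]

theorem convex_cappedSimplex (k : ℕ) : Convex ℝ (cappedSimplex ι k) := by
  refine (convex_Icc 0 1).inter (convex_halfSpace_le ⟨fun θ φ => ?_, fun c θ => ?_⟩ _)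
  · simp only [Pi.add_apply, Finset.sum_add_distrib]
  · simp only [Pi.smul_apply, Finset.smul_sum]

theorem isCompact_cappedSimplex (k : ℕ) : IsCompact (cappedSimplex ι k) :=
  isCompact_Icc.inter_right (isClosed_le (by fun_prop) continuous_const)

theorem eq_zero_of_add_mem_of_sub_mem_of_mem_extremePoints {E : Type*} [AddCommGroup E]
    [Module ℝ E] {s : Set E} {x d : E} (hx : x ∈ s.extremePoints ℝ) (hadd : x + d ∈ s)
    (hsub : x - d ∈ s) : d = 0 := by
  have hseg : x ∈ openSegment ℝ (x + d) (x - d) :=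
    ⟨2⁻¹, 2⁻¹, by norm_num, by norm_num, by norm_num, by module⟩
  exact left_eq_add.mp ((mem_extremePoints.1 hx).2 _ hadd _ hsub hseg).1.symm

theorem eventually_add_smul_mem_cappedSimplex {k : ℕ} {θ d : ι → ℝ} (hθ : θ ∈ cappedSimplex ι k)
    (hd : ∀ i, d i ≠ 0 → 0 < θ i ∧ θ i < 1) (hsum : ∑ i, d i = 0 ∨ ∑ i, θ i < k) :
    ∀ᶠ r in 𝓝 (0 : ℝ), θ + r • d ∈ cappedSimplex ι k := by
  obtain ⟨h01, hθk⟩ := mem_cappedSimplex.1 hθ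
  have hcoord : ∀ i, ∀ᶠ r in 𝓝 (0 : ℝ), 0 ≤ θ i + r * d i ∧ θ i + r * d i ≤ 1 := by
    intro i
    by_cases hi : d i = 0
    · simpa [hi] using h01 i
    have hcont : Tendsto (fun r : ℝ => θ i + r * d i) (𝓝 0) (𝓝 (θ i)) :=
      Continuous.tendsto' (by fun_prop) 0 _ (by simp)
    filter_upwards [hcont (Ioo_mem_nhds (hd i hi).1 (hd i hi).2)] with r hr
    exact ⟨hr.1.le, hr.2.le⟩
  have htotal : ∀ᶠ r in 𝓝 (0 : ℝ), ∑ i, θ i + r * ∑ i, d i ≤ k := by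
    rcases hsum with h0 | hlt
    · simpa [h0] using hθk
    have hcont : Tendsto (fun r : ℝ => ∑ i, θ i + r * ∑ i, d i) (𝓝 0) (𝓝 (∑ i, θ i)) :=
      Continuous.tendsto' (by fun_prop) 0 _ (by simp)
    exact (hcont.eventually_lt_const hlt).mono fun _ => le_of_lt
  filter_upwards [eventually_all.2 hcoord, htotal] with r hr hrk
  refine mem_cappedSimplex.2 ⟨hr, ?_⟩
  simpa [Finset.sum_add_distrib, Finset.mul_sum] using hrk

theorem eq_zero_of_mem_extremePoints_cappedSimplex {k : ℕ} {θ d : ι → ℝ}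
    (hθ : θ ∈ (cappedSimplex ι k).extremePoints ℝ) (hd : ∀ i, d i ≠ 0 → 0 < θ i ∧ θ i < 1)
    (hsum : ∑ i, d i = 0 ∨ ∑ i, θ i < k) : d = 0 := by
  have hmem := eventually_add_smul_mem_cappedSimplex (extremePoints_subset hθ) hd hsum
  have hmem_neg := (continuous_neg.tendsto' (0 : ℝ) 0 neg_zero).eventually hmem
  obtain ⟨r, ⟨hadd, hsub⟩, hr⟩ :=
    (((hmem.and hmem_neg).filter_mono nhdsWithin_le_nhds).and
      (self_mem_nhdsWithin (s := Ioi (0 : ℝ)))).exists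
  have hrd : r • d = 0 := eq_zero_of_add_mem_of_sub_mem_of_mem_extremePoints hθ hadd
    (by rwa [neg_smul, ← sub_eq_add_neg] at hsub)
  exact (smul_eq_zero.1 hrd).resolve_left (ne_of_gt hr)

theorem apply_eq_zero_or_one_of_mem_extremePoints_cappedSimplex {k : ℕ} {θ : ι → ℝ}
    (hθ : θ ∈ (cappedSimplex ι k).extremePoints ℝ) (u : ι) : θ u = 0 ∨ θ u = 1 := by
  obtain ⟨h01, hsum⟩ := mem_cappedSimplex.1 (extremePoints_subset hθ)
  have fractional_of_not : ∀ i, ¬(θ i = 0 ∨ θ i = 1) → 0 < θ i ∧ θ i < 1 := fun i hi =>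
    ⟨(h01 i).1.lt_of_ne' fun h => hi (Or.inl h), (h01 i).2.lt_of_ne fun h => hi (Or.inr h)⟩
  by_contra hu
  have hrest : ∀ v ∈ Finset.univ.erase u, θ v = 0 ∨ θ v = 1 := by
    intro v hv
    by_contra hv01
    have hvu : v ≠ u := Finset.ne_of_mem_erase hv
    have hd := eq_zero_of_mem_extremePoints_cappedSimplex hθ
      (d := Pi.single u 1 - Pi.single v 1) (fun i hi => ?_) (Or.inl (by simp))
    · simpa [hvu.symm] using congrFun hd u
    · rcases eq_or_ne i u with rfl | hiu
      · exact fractional_of_not i hu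
      rcases eq_or_ne i v with rfl | hiv
      · exact fractional_of_not i hv01
      · simp [hiu, hiv] at hi
  -- With `θ u` the only fractional weight, the total mass cannot be the integer `k`.
  have hlt : ∑ i, θ i < k := by
    rw [← Finset.add_sum_erase _ _ (Finset.mem_univ u), sum_eq_card_of_eq_zero_or_one hrest]
      at hsum ⊢
    have hu01 := fractional_of_not u hu
    have hcard : ({i ∈ Finset.univ.erase u | θ i = 1} : Finset ι).card < k := by
      exact_mod_cast (lt_add_of_pos_left _ hu01.1).trans_le hsum
    have : (({i ∈ Finset.univ.erase u | θ i = 1} : Finset ι).card : ℝ) + 1 ≤ k := by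
      exact_mod_cast hcard
    linarith
  have hd := eq_zero_of_mem_extremePoints_cappedSimplex hθ (d := Pi.single u 1)
    (fun i hi => ?_) (Or.inr hlt)
  · simpa using congrFun hd u
  · rcases eq_or_ne i u with rfl | hiu
    · exact fractional_of_not i hu
    · simp [hiu] at hi

theorem exists_eq_indicator_of_mem_extremePoints_cappedSimplex {k : ℕ} {θ : ι → ℝ}
    (hθ : θ ∈ (cappedSimplex ι k).extremePoints ℝ) :
    ∃ S : Finset ι, S.card ≤ k ∧ θ = (S : Set ι).indicator 1 := by
  have hint := apply_eq_zero_or_one_of_mem_extremePoints_cappedSimplex hθ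
  have hsum := (mem_cappedSimplex.1 (extremePoints_subset hθ)).2
  refine ⟨Finset.univ.filter (θ · = 1), ?_, funext fun i => ?_⟩
  · rw [sum_eq_card_of_eq_zero_or_one fun i _ => hint i] at hsum
    exact_mod_cast hsum
  · rcases hint i with h | h <;> simp [h]

theorem cappedSimplex_subset_convexHull_indicator (k : ℕ) :
    cappedSimplex ι k ⊆
      convexHull ℝ {θ | ∃ S : Finset ι, S.card ≤ k ∧ θ = (S : Set ι).indicator 1} := by
  have hfin : {θ : ι → ℝ | ∃ S : Finset ι, S.card ≤ k ∧ θ = (S : Set ι).indicator 1}.Finite :=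
    (Set.finite_range fun S : Finset ι => (S : Set ι).indicator (1 : ι → ℝ)).subset <| by
      rintro _ ⟨S, -, rfl⟩
      exact ⟨S, rfl⟩
  calc cappedSimplex ι k
      = closure (convexHull ℝ ((cappedSimplex ι k).extremePoints ℝ)) :=
        (closure_convexHull_extremePoints (isCompact_cappedSimplex k)
          (convex_cappedSimplex k)).symm
    _ ⊆ _ := closure_minimal
        (convexHull_mono fun _ => exists_eq_indicator_of_mem_extremePoints_cappedSimplex)
        (hfin.isClosed_convexHull ℝ)

end CappedSimplex

section SparseHull

variable {ι E : Type*}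

theorem sum_smul_mem_convexHull_sum [AddCommGroup E] [Module ℝ E] {U : Finset ι} {θ : ι → ℝ}
    {k : ℕ} (hθ : ∀ g ∈ U, 0 ≤ θ g ∧ θ g ≤ 1) (hsum : ∑ g ∈ U, θ g ≤ k) (v : ι → E) :
    ∑ g ∈ U, θ g • v g ∈ convexHull ℝ {x | ∃ S ⊆ U, S.card ≤ k ∧ x = ∑ g ∈ S, v g} := by
  have hmem : (fun g : U => θ g) ∈ cappedSimplex U k :=
    mem_cappedSimplex.2 ⟨fun g => hθ g g.2, by rwa [Finset.sum_coe_sort U θ]⟩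
  have himage := mem_image_of_mem (Fintype.linearCombination ℝ fun g : U => v g)
    (cappedSimplex_subset_convexHull_indicator k hmem)
  rw [LinearMap.image_convexHull, Fintype.linearCombination_apply,
    Finset.sum_coe_sort U fun g => θ g • v g] at himage
  refine convexHull_mono ?_ himage
  rintro _ ⟨_, ⟨S, hS, rfl⟩, rfl⟩
  refine ⟨S.map (Function.Embedding.subtype _), Finset.map_subtype_subset S, by simpa using hS, ?_⟩
  have hinter : U.attach ∩ S = S := Finset.inter_eq_right.2 fun g _ => Finset.mem_attach U g
  simp [Fintype.linearCombination_apply, Set.indicator_apply, hinter]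

theorem sum_mem_convexHull_sparse [NormedAddCommGroup E] [NormedSpace ℝ E] {U : Finset ι}
    {v : ι → E} {a : ℝ} {k : ℕ} (ha : 0 ≤ a) (hle : ∀ g ∈ U, ‖v g‖ ≤ a)
    (hsum : ∑ g ∈ U, ‖v g‖ ≤ k * a) :
    ∑ g ∈ U, v g ∈ convexHull ℝ {x | ∃ S ⊆ U, S.card ≤ k ∧
      ∃ c : ι → ℝ, (∀ g ∈ S, ‖c g • v g‖ ≤ a) ∧ x = ∑ g ∈ S, c g • v g} := by
  have hmem := sum_smul_mem_convexHull_sum (θ := fun g => ‖v g‖ / a) (k := k)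
    (fun g hg => ⟨by positivity, div_le_one_of_le₀ (hle g hg) ha⟩)
    (by rw [← Finset.sum_div]; exact div_le_of_le_mul₀ ha k.cast_nonneg hsum)
    fun g => (a / ‖v g‖) • v g
  have hrescale : ∀ g ∈ U, (‖v g‖ / a) • (a / ‖v g‖) • v g = v g := by
    intro g hg
    rcases eq_or_ne (v g) 0 with h0 | h0
    · rw [h0, smul_zero, smul_zero]
    have hv : 0 < ‖v g‖ := norm_pos_iff.2 h0
    have ha' : 0 < a := hv.trans_le (hle g hg)
    rw [smul_smul, div_mul_div_cancel₀ ha'.ne', div_self hv.ne', one_smul]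
  rw [Finset.sum_congr rfl hrescale] at hmem
  refine convexHull_mono ?_ hmem
  rintro _ ⟨S, hSU, hS, rfl⟩
  refine ⟨S, hSU, hS, fun g => a / ‖v g‖, fun g _ => ?_, rfl⟩
  rw [norm_smul, norm_div, norm_norm, Real.norm_of_nonneg ha]
  exact mul_le_of_le_div₀ ha (norm_nonneg _) le_rfl

end SparseHull

section TopSubset

variable {ι : Type*} {G T : Finset ι} {k : ℕ} {b : ι → ℝ}

/-- `T` consists of `k` largest entries of `b` on `G`, expressed by maximality of the sum:
it is a subset of `G` with at most `k` elements over which `b` has maximal sum. -/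
structure IsTopSubset (G : Finset ι) (k : ℕ) (b : ι → ℝ) (T : Finset ι) : Prop where
  subset : T ⊆ G
  card_le : T.card ≤ k
  sum_le : ∀ S ⊆ G, S.card ≤ k → ∑ i ∈ S, b i ≤ ∑ i ∈ T, b i

theorem exists_isTopSubset (G : Finset ι) (k : ℕ) (b : ι → ℝ) : ∃ T, IsTopSubset G k b T := by
  obtain ⟨T, hT, hmax⟩ := Finset.exists_max_image {S ∈ G.powerset | S.card ≤ k}
    (fun S => ∑ i ∈ S, b i) ⟨∅, by simp⟩
  simp only [Finset.mem_filter, Finset.mem_powerset] at hT hmax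
  exact ⟨T, hT.1, hT.2, fun S hSG hS => hmax S ⟨hSG, hS⟩⟩

theorem IsTopSubset.le_of_mem_of_notMem (hT : IsTopSubset G k b T) {s t : ι} (ht : t ∈ T)
    (hsG : s ∈ G) (hsT : s ∉ T) : b s ≤ b t := by
  have hs : s ∉ T.erase t := fun h => hsT (Finset.mem_of_mem_erase h)
  have hexchange := hT.sum_le (insert s (T.erase t))
    (Finset.insert_subset hsG ((Finset.erase_subset _ _).trans hT.subset))
    (by rw [Finset.card_insert_of_notMem hs, Finset.card_erase_add_one ht]; exact hT.card_le)
  rw [Finset.sum_insert hs, ← Finset.add_sum_erase T b ht] at hexchange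
  linarith

theorem IsTopSubset.mul_le_sum (hT : IsTopSubset G k b T) (hb : ∀ i ∈ G, 0 ≤ b i) {s : ι}
    (hsG : s ∈ G) (hsT : s ∉ T) : k * b s ≤ ∑ i ∈ T, b i := by
  rcases hT.card_le.eq_or_lt with hcard | hcard
  · rw [← hcard, ← nsmul_eq_mul]
    exact Finset.card_nsmul_le_sum T b _ fun t ht => hT.le_of_mem_of_notMem ht hsG hsT
  · have hinsert := hT.sum_le (insert s T) (Finset.insert_subset hsG hT.subset)
      (by rw [Finset.card_insert_of_notMem hsT]; exact hcard)
    rw [Finset.sum_insert hsT] at hinsert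
    have hs0 : b s = 0 := le_antisymm (by linarith) (hb s hsG)
    rw [hs0, mul_zero]
    exact Finset.sum_nonneg fun i hi => hb i (hT.subset hi)

end TopSubset

section RestrictedIsometry

variable {H F : Type*} [NormedAddCommGroup H] [InnerProductSpace ℝ H]
  [NormedAddCommGroup F] [InnerProductSpace ℝ F] {A : H →L[ℝ] F} {S : Set H} {δ : ℝ}

theorem add_mem_secantSet (hS : ∀ s ∈ S, ∀ a : ℝ, a • s ∈ S) {s t : H} (hs : s ∈ S)
    (ht : t ∈ S) : s + t ∈ secantSet S :=
  ⟨s, hs, -t, by simpa using hS t ht (-1), (sub_neg_eq_add s t).symm⟩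

theorem mem_secantSet_of_mem (hS : ∀ s ∈ S, ∀ a : ℝ, a • s ∈ S) {s : H} (hs : s ∈ S) :
    s ∈ secantSet S :=
  ⟨s, hs, 0, by simpa using hS s hs 0, (sub_zero s).symm⟩

theorem SatisfiesRIP.norm_map_le (hA : SatisfiesRIP A S δ) {s : H} (hs : s ∈ secantSet S) :
    ‖A s‖ ≤ √(1 + δ) * ‖s‖ := by
  rw [← Real.sqrt_sq (norm_nonneg s), ← Real.sqrt_mul' _ (sq_nonneg _)]
  exact Real.le_sqrt_of_sq_le (hA s hs).2

theorem SatisfiesRIP.eq_zero_of_neg (hA : SatisfiesRIP A S δ) (hδ : δ < 0) {s : H}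
    (hs : s ∈ secantSet S) : s = 0 := by
  by_contra hne
  have hpos : 0 < ‖s‖ ^ 2 := by positivity
  nlinarith [hA s hs]

/-- Polarization against `u ± γ v`; the free parameter `γ` optimizes the AM-GM error term. -/
theorem SatisfiesRIP.le_inner_map (hA : SatisfiesRIP A S δ) {u v : H} {γ : ℝ}
    (hadd : u + γ • v ∈ secantSet S) (hsub : u - γ • v ∈ secantSet S) :
    4 * γ * ⟪u, v⟫ - 2 * δ * (‖u‖ ^ 2 + γ ^ 2 * ‖v‖ ^ 2) ≤ 4 * γ * ⟪A u, A v⟫ := by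
  have hlower := (hA _ hadd).1
  have hupper := (hA _ hsub).2
  rw [map_add, map_smul, norm_add_sq_real, norm_add_sq_real] at hlower
  rw [map_sub, map_smul, norm_sub_sq_real, norm_sub_sq_real] at hupper
  simp only [norm_smul, mul_pow, real_inner_smul_right, Real.norm_eq_abs, sq_abs]
    at hlower hupper
  linarith

/-- The right-hand side of the polarized estimate is affine in `s`, which is what lets it pass to
the convex hull. -/
theorem SatisfiesRIP.le_inner_map_add_of_mem (hA : SatisfiesRIP A S δ) (hδ : 0 ≤ δ)
    (hS : ∀ s ∈ S, ∀ a : ℝ, a • s ∈ S) {c : ℝ} {y s : H} (hy : y ∈ S) (hs : s ∈ S)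
    (hsy : ‖s‖ ≤ c * ‖y‖) :
    (1 - δ * √(1 + c ^ 2)) * ‖y‖ ^ 2 ≤
      ⟪A (y + s), A y⟫ - (1 - δ / √(1 + c ^ 2)) * ⟪s, y⟫ := by
  set γ := √(1 + c ^ 2)
  have hγ : 0 < γ := by positivity
  have hγ_sq : γ ^ 2 = 1 + c ^ 2 := Real.sq_sqrt (by positivity)
  have hpolar := hA.le_inner_map (u := y + s) (v := y) (γ := γ)
    (by convert add_mem_secantSet hS hs (hS y hy (1 + γ)) using 1; module)
    (by convert add_mem_secantSet hS hs (hS y hy (1 - γ)) using 1; module)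
  have hnorm : ‖y + s‖ ^ 2 ≤ γ ^ 2 * ‖y‖ ^ 2 + 2 * ⟪s, y⟫ := by
    rw [norm_add_sq_real, real_inner_comm, hγ_sq]
    have := pow_le_pow_left₀ (norm_nonneg s) hsy 2
    linarith [mul_pow c ‖y‖ 2]
  rw [inner_add_left, real_inner_self_eq_norm_sq] at hpolar
  have hscaled : 4 * γ * ((1 - δ * γ) * ‖y‖ ^ 2) ≤
      4 * γ * (⟪A (y + s), A y⟫ - (1 - δ / γ) * ⟪s, y⟫) := by
    have hγδ : γ * (δ / γ) = δ := mul_div_cancel₀ δ hγ.ne'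
    linear_combination hpolar + 2 * δ * hnorm - 4 * ⟪s, y⟫ * hγδ
  exact le_of_mul_le_mul_left hscaled (by positivity)

theorem SatisfiesRIP.le_inner_map_add (hA : SatisfiesRIP A S δ)
    (hS : ∀ s ∈ S, ∀ a : ℝ, a • s ∈ S) {c R : ℝ} {y t : H} (hy : y ∈ S)
    (ht : t ∈ convexHull ℝ (S ∩ Metric.closedBall 0 R)) (hty : ⟪t, y⟫ = 0)
    (hR : R ≤ c * ‖y‖) :
    (1 - δ * √(1 + c ^ 2)) * ‖y‖ ^ 2 ≤ ⟪A (y + t), A y⟫ := by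
  rcases lt_or_ge δ 0 with hδ | hδ
  · simp [hA.eq_zero_of_neg hδ (mem_secantSet_of_mem hS hy)]
  set κ := 1 - δ / √(1 + c ^ 2)
  have hconvex : Convex ℝ {s : H | (1 - δ * √(1 + c ^ 2)) * ‖y‖ ^ 2 - ‖A y‖ ^ 2 ≤
      ⟪A s, A y⟫ - κ * ⟪s, y⟫} := by
    refine convex_halfSpace_ge ⟨fun s s' => ?_, fun a s => ?_⟩ _
    · simp only [map_add, inner_add_left]; ring
    · simp only [map_smul, real_inner_smul_left, smul_eq_mul]; ring
  have hvertex : S ∩ Metric.closedBall 0 R ⊆ {s : H | (1 - δ * √(1 + c ^ 2)) * ‖y‖ ^ 2 -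
      ‖A y‖ ^ 2 ≤ ⟪A s, A y⟫ - κ * ⟪s, y⟫} := by
    rintro s ⟨hs, hsR⟩
    have hs_le : ‖s‖ ≤ c * ‖y‖ := (mem_closedBall_zero_iff.1 hsR).trans hR
    have := hA.le_inner_map_add_of_mem hδ hS hy hs hs_le
    rw [map_add, inner_add_left, real_inner_self_eq_norm_sq] at this
    rw [mem_ofPred_eq]
    linarith
  have hhull := convexHull_min hvertex hconvex ht
  rw [mem_ofPred_eq, hty] at hhull
  rw [map_add, inner_add_left, real_inner_self_eq_norm_sq]
  linarith

theorem norm_le_of_mem_convexHull_inter_closedBall {R : ℝ} {t : H}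
    (ht : t ∈ convexHull ℝ (S ∩ Metric.closedBall 0 R)) : ‖t‖ ≤ R :=
  mem_closedBall_zero_iff.1 (convexHull_min inter_subset_right (convex_closedBall 0 R) ht)

theorem SatisfiesRIP.norm_map_le_of_mem_convexHull (hA : SatisfiesRIP A S δ)
    (hS : ∀ s ∈ S, ∀ a : ℝ, a • s ∈ S) {R : ℝ} {t : H}
    (ht : t ∈ convexHull ℝ (S ∩ Metric.closedBall 0 R)) : ‖A t‖ ≤ √(1 + δ) * R := by
  have hsub : S ∩ Metric.closedBall 0 R ⊆ A ⁻¹' Metric.closedBall 0 (√(1 + δ) * R) := by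
    rintro s ⟨hs, hsR⟩
    rw [mem_preimage, mem_closedBall_zero_iff]
    rw [mem_closedBall_zero_iff] at hsR
    exact (hA.norm_map_le (mem_secantSet_of_mem hS hs)).trans (by gcongr)
  exact mem_closedBall_zero_iff.1 <|
    convexHull_min hsub ((convex_closedBall _ _).linear_preimage A.toLinearMap) ht

/-- The factor by which `‖A (y + t)‖` controls `‖y + t‖` when `y` lies in the model, `t ⊥ y` is an
average of model vectors of norm at most `c * ‖y‖`, and `A` has RIP constant `δ`. It is the
constant `C` of the recovery bound for `c = √(1 + J)`. -/
def robustnessConst (c δ : ℝ) : ℝ := (1 + c) * √(1 + δ) / (1 - δ * √(1 + c ^ 2))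

theorem one_sub_mul_sqrt_pos {c : ℝ} (hδ : δ < 1 / √(1 + c ^ 2)) : 0 < 1 - δ * √(1 + c ^ 2) :=
  sub_pos.2 ((lt_div_iff₀ (by positivity)).1 hδ)

theorem robustnessConst_nonneg {c : ℝ} (hc : 0 ≤ c) (hδ : δ < 1 / √(1 + c ^ 2)) :
    0 ≤ robustnessConst c δ :=
  div_nonneg (by positivity) (one_sub_mul_sqrt_pos hδ).le

theorem SatisfiesRIP.norm_le_robustnessConst_mul (hA : SatisfiesRIP A S δ)
    (hS : ∀ s ∈ S, ∀ a : ℝ, a • s ∈ S) {c R : ℝ} (hc : 0 ≤ c) (hδ : δ < 1 / √(1 + c ^ 2))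
    {y t : H} (hy : y ∈ S) (ht : t ∈ convexHull ℝ (S ∩ Metric.closedBall 0 R))
    (hty : ⟪t, y⟫ = 0) (hR : R ≤ c * ‖y‖) :
    ‖y + t‖ ≤ robustnessConst c δ * ‖A (y + t)‖ := by
  have hden := one_sub_mul_sqrt_pos hδ
  have hsq : (1 - δ * √(1 + c ^ 2)) * ‖y‖ ^ 2 ≤ ‖A (y + t)‖ * (√(1 + δ) * ‖y‖) :=
    calc (1 - δ * √(1 + c ^ 2)) * ‖y‖ ^ 2 ≤ ⟪A (y + t), A y⟫ := hA.le_inner_map_add hS hy ht hty hR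
      _ ≤ ‖A (y + t)‖ * ‖A y‖ := real_inner_le_norm _ _
      _ ≤ _ := by gcongr; exact hA.norm_map_le (mem_secantSet_of_mem hS hy)
  have hy_le : ‖y‖ ≤ √(1 + δ) * ‖A (y + t)‖ / (1 - δ * √(1 + c ^ 2)) := by
    rw [le_div_iff₀ hden]
    rcases (norm_nonneg y).eq_or_lt with h0 | hpos
    · rw [← h0, zero_mul]; positivity
    · exact le_of_mul_le_mul_right (by linarith) hpos
  calc ‖y + t‖ ≤ ‖y‖ + c * ‖y‖ :=
        (norm_add_le _ _).trans <|
          add_le_add_right ((norm_le_of_mem_convexHull_inter_closedBall ht).trans hR) _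
    _ = (1 + c) * ‖y‖ := by ring
    _ ≤ (1 + c) * (√(1 + δ) * ‖A (y + t)‖ / (1 - δ * √(1 + c ^ 2))) := by gcongr
    _ = robustnessConst c δ * ‖A (y + t)‖ := by rw [robustnessConst]; ring

theorem smul_mem_convexHull_inter_closedBall (hS : ∀ s ∈ S, ∀ a : ℝ, a • s ∈ S) {R a : ℝ}
    (ha : 0 ≤ a) {t : H} (ht : t ∈ convexHull ℝ (S ∩ Metric.closedBall 0 R)) :
    a • t ∈ convexHull ℝ (S ∩ Metric.closedBall 0 (a * R)) := by
  have hmem : a • t ∈ convexHull ℝ (a • (S ∩ Metric.closedBall 0 R)) := by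
    rw [convexHull_smul]
    exact smul_mem_smul_set ht
  refine convexHull_mono ?_ hmem
  rintro _ ⟨s, ⟨hs, hsR⟩, rfl⟩
  rw [mem_closedBall_zero_iff] at hsR
  refine ⟨hS s hs a, mem_closedBall_zero_iff.2 ?_⟩
  rw [norm_smul, Real.norm_of_nonneg ha]
  gcongr

/-- Only the part `μ • t` of the tail is within reach of the RIP; the remainder `(1 - μ) • t` is
treated as an additional error. -/
theorem SatisfiesRIP.norm_add_le_add_mul (hA : SatisfiesRIP A S δ)
    (hS : ∀ s ∈ S, ∀ a : ℝ, a • s ∈ S) {c R ρ μ : ℝ} (hc : 0 ≤ c) (hδ : δ < 1 / √(1 + c ^ 2))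
    {y t : H} (hy : y ∈ S) (ht : t ∈ convexHull ℝ (S ∩ Metric.closedBall 0 R))
    (hty : ⟪t, y⟫ = 0) (hμ : μ ∈ Icc 0 1) (hμR : μ * R ≤ c * ‖y‖) (hρ : (1 - μ) * R ≤ ρ) :
    ‖y + t‖ ≤ robustnessConst c δ * ‖A (y + t)‖ +
      (1 + √(1 + δ) * robustnessConst c δ) * ρ := by
  have hC := robustnessConst_nonneg hc hδ
  have hnear : ‖y + μ • t‖ ≤ robustnessConst c δ * ‖A (y + μ • t)‖ :=
    hA.norm_le_robustnessConst_mul hS hc hδ hy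
      (smul_mem_convexHull_inter_closedBall hS hμ.1 ht)
      (by rw [real_inner_smul_left, hty, mul_zero]) hμR
  have hrest := smul_mem_convexHull_inter_closedBall hS (sub_nonneg.2 hμ.2) ht
  have hrest_norm : ‖(1 - μ) • t‖ ≤ ρ :=
    (norm_le_of_mem_convexHull_inter_closedBall hrest).trans hρ
  have hrest_map : ‖A ((1 - μ) • t)‖ ≤ √(1 + δ) * ρ :=
    (hA.norm_map_le_of_mem_convexHull hS hrest).trans (by gcongr)
  have hmap : ‖A (y + μ • t)‖ ≤ ‖A (y + t)‖ + √(1 + δ) * ρ := by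
    have hsplit : y + μ • t = (y + t) - (1 - μ) • t := by module
    rw [hsplit, map_sub]
    exact (norm_sub_le _ _).trans (add_le_add_right hrest_map _)
  calc ‖y + t‖ = ‖(y + μ • t) + (1 - μ) • t‖ := by congr 1; module
    _ ≤ robustnessConst c δ * (‖A (y + t)‖ + √(1 + δ) * ρ) + ρ :=
        (norm_add_le _ _).trans <|
          add_le_add (hnear.trans (by gcongr)) hrest_norm
    _ = _ := by ring

end RestrictedIsometry

section GroupProj

variable {H : Type*} [NormedAddCommGroup H] [InnerProductSpace ℝ H] {I ι : Type*} {e : I → H}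

theorem norm_sum_sq_of_pairwise_inner_eq_zero {s : Finset ι} {v : ι → H}
    (hv : (s : Set ι).Pairwise fun p q => ⟪v p, v q⟫ = 0) :
    ‖∑ p ∈ s, v p‖ ^ 2 = ∑ p ∈ s, ‖v p‖ ^ 2 := by
  rw [← real_inner_self_eq_norm_sq, sum_inner]
  refine Finset.sum_congr rfl fun p hp => ?_
  rw [inner_sum, Finset.sum_eq_single_of_mem p hp fun q hq hqp => hv hp hq hqp.symm,
    real_inner_self_eq_norm_sq]

theorem groupProj_sub (g : Finset I) (x y : H) :
    groupProj e g (x - y) = groupProj e g x - groupProj e g y := by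
  simp only [groupProj, inner_sub_left, sub_smul, Finset.sum_sub_distrib]

theorem groupProj_smul (g : Finset I) (a : ℝ) (x : H) :
    groupProj e g (a • x) = a • groupProj e g x := by
  simp only [groupProj, real_inner_smul_left, mul_smul, Finset.smul_sum]

theorem groupProj_sum (g : Finset I) (s : Finset ι) (x : ι → H) :
    groupProj e g (∑ p ∈ s, x p) = ∑ p ∈ s, groupProj e g (x p) := by
  simp only [groupProj, sum_inner, Finset.sum_smul]
  exact Finset.sum_comm

theorem groupProj_mem_span (g : Finset I) (x : H) :
    groupProj e g x ∈ Submodule.span ℝ (e '' g) :=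
  Submodule.sum_mem _ fun _ hi =>
    Submodule.smul_mem _ _ (Submodule.subset_span (mem_image_of_mem e hi))

theorem sum_groupProj_eq_groupProj_biUnion {s : Finset ι} {γ : ι → Finset I}
    (hγ : (s : Set ι).PairwiseDisjoint γ) (x : H) :
    ∑ p ∈ s, groupProj e (γ p) x = groupProj e (s.biUnion γ) x :=
  (Finset.sum_biUnion hγ).symm

theorem groupProj_eq_self_of_mem_span (he : Orthonormal ℝ e) {g : Finset I} {x : H}
    (hx : x ∈ Submodule.span ℝ (e '' g)) : groupProj e g x = x := by
  obtain ⟨c, rfl⟩ := (Submodule.mem_span_image_finset_iff_exists_fun' (R := ℝ)).1 hx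
  refine Finset.sum_congr rfl fun i hi => ?_
  rw [real_inner_comm, he.inner_right_sum c hi]

theorem inner_groupProj_eq_zero (he : Orthonormal ℝ e) {g : Finset I} {i : I} (hi : i ∉ g)
    (x : H) : ⟪groupProj e g x, e i⟫ = 0 := by
  rw [groupProj, sum_inner]
  refine Finset.sum_eq_zero fun i' hi' => ?_
  rw [real_inner_smul_left, he.2 (ne_of_mem_of_not_mem hi' hi), mul_zero]

theorem inner_groupProj_groupProj_of_disjoint (he : Orthonormal ℝ e) {g g' : Finset I}
    (h : Disjoint g g') (x y : H) : ⟪groupProj e g x, groupProj e g' y⟫ = 0 := by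
  rw [groupProj.eq_def e g', inner_sum]
  refine Finset.sum_eq_zero fun i hi => ?_
  rw [real_inner_smul_right, inner_groupProj_eq_zero he (Finset.disjoint_right.1 h hi), mul_zero]

theorem groupProj_groupProj_of_disjoint (he : Orthonormal ℝ e) {g g' : Finset I}
    (h : Disjoint g g') (x : H) : groupProj e g (groupProj e g' x) = 0 :=
  Finset.sum_eq_zero fun i hi => by
    rw [inner_groupProj_eq_zero he (Finset.disjoint_left.1 h hi), zero_smul]

theorem groupProj_sum_groupProj (he : Orthonormal ℝ e) {s : Finset ι} {γ : ι → Finset I}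
    (hγ : (s : Set ι).PairwiseDisjoint γ) (z : ι → H) {p : ι} (hp : p ∈ s) :
    groupProj e (γ p) (∑ q ∈ s, groupProj e (γ q) (z q)) = groupProj e (γ p) (z p) := by
  rw [groupProj_sum, Finset.sum_eq_single_of_mem p hp fun q hq hqp =>
    groupProj_groupProj_of_disjoint he (hγ hp hq hqp.symm) (z q)]
  exact groupProj_eq_self_of_mem_span he (groupProj_mem_span (γ p) (z p))

theorem norm_sum_groupProj_sq (he : Orthonormal ℝ e) {s : Finset ι} {γ : ι → Finset I}
    (hγ : (s : Set ι).PairwiseDisjoint γ) (z : ι → H) :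
    ‖∑ p ∈ s, groupProj e (γ p) (z p)‖ ^ 2 = ∑ p ∈ s, ‖groupProj e (γ p) (z p)‖ ^ 2 :=
  norm_sum_sq_of_pairwise_inner_eq_zero fun _ hp _ hq hpq =>
    inner_groupProj_groupProj_of_disjoint he (hγ hp hq hpq) _ _

theorem sum_groupProj_mem_kGroupSparse (he : Orthonormal ℝ e) {G S : Finset (Finset I)} {k : ℕ}
    (hG : (G : Set (Finset I)).PairwiseDisjoint id) (hSG : S ⊆ G) (hS : S.card ≤ k)
    (z : Finset I → H) : ∑ g ∈ S, groupProj e g (z g) ∈ kGroupSparse e G k :=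
  ⟨S, hSG, hS, Finset.sum_congr rfl fun _ hg =>
    (groupProj_sum_groupProj he (hG.subset (Finset.coe_subset.2 hSG)) z hg).symm⟩

theorem smul_mem_kGroupSparse {G : Finset (Finset I)} {k : ℕ} {x : H}
    (hx : x ∈ kGroupSparse e G k) (a : ℝ) : a • x ∈ kGroupSparse e G k := by
  obtain ⟨T, hTG, hT, hxT⟩ := hx
  refine ⟨T, hTG, hT, ?_⟩
  conv_lhs => rw [hxT, groupRestrict, Finset.smul_sum]
  exact Finset.sum_congr rfl fun g _ => (groupProj_smul g a x).symm

end GroupProj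

section Levels

variable {H : Type*} [NormedAddCommGroup H] [InnerProductSpace ℝ H] {I : Type*} {e : I → H}
  {J : ℕ} {G T : Fin J → Finset (Finset I)} {k : Fin J → ℕ} {w : Fin J → ℝ}

/-- All groups of all levels are pairwise disjoint. A group is tagged with its level, so that
distinct levels share no nonempty group. -/
def DisjointGroups (G : Fin J → Finset (Finset I)) : Prop :=
  (Finset.univ.sigma G : Set (Σ _ : Fin J, Finset I)).PairwiseDisjoint Sigma.snd

/-- The restriction of `x` to the groups `T j` selected in the levels `j`. -/
def levelsRestrict (e : I → H) (T : Fin J → Finset (Finset I)) (x : H) : H :=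
  ∑ j, groupRestrict e (T j) x

/-- The span of the coordinates covered by the groups, off which `fwLevels` is infinite. -/
def coveredSpan (e : I → H) (G : Fin J → Finset (Finset I)) : Submodule ℝ H :=
  Submodule.span ℝ (e '' {i | ∃ j, ∃ g ∈ G j, i ∈ g})

/-- The sum of the norms of the components of `x` in the groups of `T`. -/
def groupNorm (e : I → H) (T : Finset (Finset I)) (x : H) : ℝ :=
  ∑ g ∈ T, ‖groupProj e g x‖

/-- The weighted group norm of the restriction of `x` to the groups `T j`; on `coveredSpan e G`,
`levelsNorm e w G` is the real value of `fwLevels e G w`. -/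
def levelsNorm (e : I → H) (w : Fin J → ℝ) (T : Fin J → Finset (Finset I)) (x : H) : ℝ :=
  ∑ j, w j * groupNorm e (T j) x

/-- The weights `w_j = 1 / √k_j` adapted to the sparsities `k_j`. -/
def adaptedWeight (k : Fin J → ℕ) (j : Fin J) : ℝ :=
  (√(k j))⁻¹

theorem adaptedWeight_nonneg (k : Fin J → ℕ) (j : Fin J) : 0 ≤ adaptedWeight k j :=
  inv_nonneg.2 (Real.sqrt_nonneg _)

theorem groupNorm_nonneg (S : Finset (Finset I)) (x : H) : 0 ≤ groupNorm e S x :=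
  Finset.sum_nonneg fun _ _ => norm_nonneg _

theorem levelsNorm_nonneg (hw : ∀ j, 0 ≤ w j) (x : H) : 0 ≤ levelsNorm e w T x :=
  Finset.sum_nonneg fun j _ => mul_nonneg (hw j) (groupNorm_nonneg (T j) x)

theorem disjointGroups_of_level {lvl : I → Fin J} (hlvl : ∀ j, ∀ g ∈ G j, ∀ i ∈ g, lvl i = j)
    (hdisj : ∀ j, ∀ g ∈ G j, ∀ g' ∈ G j, g ≠ g' → Disjoint g g') : DisjointGroups G := by
  rintro ⟨j, g⟩ hg ⟨j', g'⟩ hg' hne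
  simp only [Finset.mem_coe, Finset.mem_sigma, Finset.mem_univ, true_and] at hg hg'
  rcases eq_or_ne j j' with rfl | hj
  · exact hdisj j g hg g' hg' fun h => hne (h ▸ rfl)
  · exact Finset.disjoint_left.2 fun i hi hi' =>
      hj ((hlvl j g hg i hi).symm.trans (hlvl j' g' hg' i hi'))

theorem DisjointGroups.mono (hG : DisjointGroups G) (hT : ∀ j, T j ⊆ G j) : DisjointGroups T :=
  hG.subset (Finset.coe_subset.2 (Finset.sigma_mono subset_rfl hT))

theorem DisjointGroups.pairwiseDisjoint (hG : DisjointGroups G) (j : Fin J) :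
    (G j : Set (Finset I)).PairwiseDisjoint id := fun g hg g' hg' hne =>
  hG (x := ⟨j, g⟩) (by simpa using hg) (y := ⟨j, g'⟩) (by simpa using hg')
    fun h => hne (by simpa using h)

theorem levelsRestrict_eq_groupProj (hT : DisjointGroups T) (x : H) :
    levelsRestrict e T x = groupProj e ((Finset.univ.sigma T).biUnion Sigma.snd) x := by
  rw [← sum_groupProj_eq_groupProj_biUnion hT, Finset.sum_sigma]
  rfl

theorem norm_sum_sum_groupProj_sq (he : Orthonormal ℝ e) (hT : DisjointGroups T)
    (z : Fin J → Finset I → H) : ‖∑ j, ∑ g ∈ T j, groupProj e g (z j g)‖ ^ 2 =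
      ∑ j, ∑ g ∈ T j, ‖groupProj e g (z j g)‖ ^ 2 := by
  simpa only [Finset.sum_sigma] using norm_sum_groupProj_sq he hT fun p => z p.1 p.2

theorem sum_sum_groupProj_mem_sparsityInLevels (he : Orthonormal ℝ e) (hG : DisjointGroups G)
    (hTG : ∀ j, T j ⊆ G j) (hT : ∀ j, (T j).card ≤ k j) (z : Fin J → Finset I → H) :
    ∑ j, ∑ g ∈ T j, groupProj e g (z j g) ∈ sparsityInLevels e G k :=
  ⟨_, fun j => sum_groupProj_mem_kGroupSparse he (hG.pairwiseDisjoint j) (hTG j) (hT j) (z j), rfl⟩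

theorem levelsRestrict_mem_sparsityInLevels (he : Orthonormal ℝ e) (hG : DisjointGroups G)
    (hTG : ∀ j, T j ⊆ G j) (hT : ∀ j, (T j).card ≤ k j) (x : H) :
    levelsRestrict e T x ∈ sparsityInLevels e G k :=
  sum_sum_groupProj_mem_sparsityInLevels he hG hTG hT fun _ _ => x

theorem smul_mem_sparsityInLevels {x : H} (hx : x ∈ sparsityInLevels e G k) (a : ℝ) :
    a • x ∈ sparsityInLevels e G k := by
  obtain ⟨c, hc, rfl⟩ := hx
  exact ⟨_, fun j => smul_mem_kGroupSparse (hc j) a, Finset.smul_sum⟩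

theorem levelsRestrict_eq_self (he : Orthonormal ℝ e) (hG : DisjointGroups G) {x : H}
    (hx : x ∈ coveredSpan e G) : levelsRestrict e G x = x := by
  rw [levelsRestrict_eq_groupProj hG]
  refine groupProj_eq_self_of_mem_span he ?_
  rw [coveredSpan] at hx
  convert hx
  ext i
  simp

theorem sparsityInLevels_subset_coveredSpan :
    sparsityInLevels e G k ⊆ coveredSpan e G := by
  rintro _ ⟨c, hc, rfl⟩
  refine Submodule.sum_mem _ fun j _ => ?_
  obtain ⟨T, hTG, -, hcT⟩ := hc j
  rw [hcT]
  refine Submodule.sum_mem _ fun g hg => Submodule.span_mono ?_ (groupProj_mem_span g (c j))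
  exact image_mono fun i hi => ⟨j, g, hTG hg, hi⟩

theorem inner_levelsRestrict_sdiff (he : Orthonormal ℝ e) (hG : DisjointGroups G)
    (hTG : ∀ j, T j ⊆ G j) (x : H) :
    ⟪levelsRestrict e (fun j => G j \ T j) x, levelsRestrict e T x⟫ = 0 := by
  rw [levelsRestrict_eq_groupProj (hG.mono hTG),
    levelsRestrict_eq_groupProj (hG.mono fun j => Finset.sdiff_subset)]
  refine inner_groupProj_groupProj_of_disjoint he ?_ _ _
  simp only [Finset.disjoint_biUnion_left, Finset.disjoint_biUnion_right]
  rintro ⟨j', g'⟩ hg' ⟨j, g⟩ hg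
  simp only [Finset.mem_sigma, Finset.mem_univ, true_and, Finset.mem_sdiff] at hg hg'
  refine hG (by simpa using hg.1) (by simpa using hTG j' hg') fun h => ?_
  obtain ⟨rfl, rfl⟩ : j = j' ∧ g = g' := by simpa using h
  exact hg.2 hg'

theorem levelsRestrict_add_levelsRestrict_sdiff (hTG : ∀ j, T j ⊆ G j) (x : H) :
    levelsRestrict e T x + levelsRestrict e (fun j => G j \ T j) x = levelsRestrict e G x := by
  simp only [levelsRestrict, groupRestrict, ← Finset.sum_add_distrib]
  exact Finset.sum_congr rfl fun j _ => (add_comm _ _).trans (Finset.sum_sdiff (hTG j))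

theorem levelsNorm_add_levelsNorm_sdiff (hTG : ∀ j, T j ⊆ G j) (x : H) :
    levelsNorm e w T x + levelsNorm e w (fun j => G j \ T j) x = levelsNorm e w G x := by
  simp only [levelsNorm, groupNorm, ← Finset.sum_add_distrib, ← mul_add]
  exact Finset.sum_congr rfl fun j _ => by rw [add_comm, Finset.sum_sdiff (hTG j)]

theorem levelsRestrict_mem_convexHull (he : Orthonormal ℝ e) (hG : DisjointGroups G)
    (hTG : ∀ j, T j ⊆ G j) {x : H} {a : Fin J → ℝ} (ha : ∀ j, 0 ≤ a j)
    (hle : ∀ j, ∀ g ∈ T j, ‖groupProj e g x‖ ≤ a j)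
    (hsum : ∀ j, groupNorm e (T j) x ≤ k j * a j) :
    levelsRestrict e T x ∈ convexHull ℝ
      (sparsityInLevels e G k ∩ Metric.closedBall 0 √(∑ j, k j * a j ^ 2)) := by
  have hlevels := Set.finsetSum_mem_finsetSum Finset.univ _ _ fun j _ =>
    sum_mem_convexHull_sparse (ha j) (hle j) (hsum j)
  rw [← convexHull_sum] at hlevels
  refine convexHull_mono (fun y hy => ?_) hlevels
  obtain ⟨f, hf, rfl⟩ := (Set.mem_fintype_sum _ _).1 hy
  choose S hST hS c hc hfS using hf
  have hf_eq : ∑ j, f j = ∑ j, ∑ g ∈ S j, groupProj e g (c j g • x) := by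
    simp only [hfS, groupProj_smul]
  have hSG : ∀ j, S j ⊆ G j := fun j => (hST j).trans (hTG j)
  rw [hf_eq]
  refine ⟨sum_sum_groupProj_mem_sparsityInLevels he hG hSG hS _, ?_⟩
  rw [mem_closedBall_zero_iff]
  refine Real.le_sqrt_of_sq_le ?_
  rw [norm_sum_sum_groupProj_sq he (hG.mono hSG)]
  refine Finset.sum_le_sum fun j _ => ?_
  calc ∑ g ∈ S j, ‖groupProj e g (c j g • x)‖ ^ 2
      ≤ (S j).card • a j ^ 2 := Finset.sum_le_card_nsmul _ _ _ fun g hg => by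
        rw [groupProj_smul]
        exact pow_le_pow_left₀ (norm_nonneg _) (hc j g hg) 2
    _ ≤ k j * a j ^ 2 := by
        rw [nsmul_eq_mul]
        gcongr
        exact hS j

theorem exists_groupProj_eq_zero_of_mem_sparsityInLevels (he : Orthonormal ℝ e)
    (hG : DisjointGroups G) {x : H} (hx : x ∈ sparsityInLevels e G k) :
    ∃ T : Fin J → Finset (Finset I), (∀ j, T j ⊆ G j) ∧ (∀ j, (T j).card ≤ k j) ∧
      ∀ j, ∀ g ∈ G j \ T j, groupProj e g x = 0 := by
  obtain ⟨c, hc, rfl⟩ := hx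
  choose T hTG hT hcT using hc
  refine ⟨T, hTG, hT, fun j g hg => ?_⟩
  rw [Finset.mem_sdiff] at hg
  rw [groupProj_sum]
  refine Finset.sum_eq_zero fun j' _ => ?_
  rw [hcT j', groupRestrict, groupProj_sum]
  refine Finset.sum_eq_zero fun g' hg' => groupProj_groupProj_of_disjoint he ?_ _
  refine hG (x := ⟨j, g⟩) (by simpa using hg.1) (y := ⟨j', g'⟩) (by simpa using hTG j' hg')
    fun h => ?_
  obtain ⟨rfl, rfl⟩ : j = j' ∧ g = g' := by simpa using h
  exact hg.2 hg'

theorem levelsNorm_sub_le (hw : ∀ j, 0 ≤ w j) (hTG : ∀ j, T j ⊆ G j) {x xs x' : H}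
    (hx' : ∀ j, ∀ g ∈ G j \ T j, groupProj e g x' = 0)
    (hle : levelsNorm e w G xs ≤ levelsNorm e w G x) :
    levelsNorm e w G (xs - x) ≤ 2 * levelsNorm e w T (xs - x) + 2 * levelsNorm e w G (x - x') := by
  have hon : levelsNorm e w T x ≤ levelsNorm e w T xs + levelsNorm e w T (xs - x) := by
    simp only [levelsNorm, groupNorm, ← Finset.sum_add_distrib, ← mul_add]
    gcongr with j _ g
    · exact hw j
    rw [groupProj_sub]
    exact norm_le_norm_add_norm_sub _ _
  have hoff : levelsNorm e w (fun j => G j \ T j) (xs - x) ≤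
      levelsNorm e w (fun j => G j \ T j) xs + levelsNorm e w (fun j => G j \ T j) x := by
    simp only [levelsNorm, groupNorm, ← Finset.sum_add_distrib, ← mul_add]
    gcongr with j _ g
    · exact hw j
    rw [groupProj_sub]
    exact norm_sub_le _ _
  have hoff_eq : levelsNorm e w (fun j => G j \ T j) x =
      levelsNorm e w (fun j => G j \ T j) (x - x') := by
    refine Finset.sum_congr rfl fun j _ => congrArg _ (Finset.sum_congr rfl fun g hg => ?_)
    rw [groupProj_sub, hx' j g hg, sub_zero]
  have hnonneg := levelsNorm_nonneg (e := e) (T := T) hw (x - x')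
  have hsplit := fun z : H => levelsNorm_add_levelsNorm_sdiff (e := e) (w := w) hTG z
  linarith [hsplit (xs - x), hsplit xs, hsplit x, hsplit (x - x')]

end Levels

section Recovery

/-- The factor `min 1 (Y / τ)` shrinks a tail of weighted norm `τ` to the weighted norm `Y` of the
head. -/
theorem exists_shrink_factor {J : ℕ} {R Y τ n η : ℝ} (hY : 0 ≤ Y) (hn : 0 ≤ n) (hη : 0 ≤ η)
    (hRn : R ^ 2 ≤ n ^ 2 + τ ^ 2) (hRY : R ^ 2 ≤ Y ^ 2 + τ ^ 2) (hYn : Y ^ 2 ≤ J * n ^ 2)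
    (hτ0 : 0 ≤ τ) (hτ : τ ≤ Y + 2 * η) :
    ∃ μ ∈ Icc (0 : ℝ) 1, μ * R ≤ √(1 + J) * n ∧ (1 - μ) * R ≤ 2 * √2 * η := by
  have hsq : (√(1 + J) * n) ^ 2 = n ^ 2 + J * n ^ 2 := by
    rw [mul_pow, Real.sq_sqrt (by positivity)]
    ring
  rcases le_or_gt τ Y with h | h
  · refine ⟨1, by simp, ?_, by rw [sub_self, zero_mul]; positivity⟩
    rw [one_mul]
    refine le_of_sq_le_sq ?_ (by positivity)
    linarith [pow_le_pow_left₀ hτ0 h 2]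
  · have hτpos : 0 < τ := hY.trans_lt h
    have hμτ : Y / τ * τ = Y := div_mul_cancel₀ Y hτpos.ne'
    have hμ1 : Y / τ ≤ 1 := (div_le_one hτpos).2 h.le
    refine ⟨Y / τ, ⟨by positivity, hμ1⟩, le_of_sq_le_sq ?_ (by positivity), ?_⟩
    · calc (Y / τ * R) ^ 2 ≤ (Y / τ) ^ 2 * (n ^ 2 + τ ^ 2) := by rw [mul_pow]; gcongr
        _ = (Y / τ) ^ 2 * n ^ 2 + Y ^ 2 := by rw [mul_add, ← mul_pow _ τ, hμτ]
        _ ≤ 1 * n ^ 2 + J * n ^ 2 := by gcongr; exact pow_le_one₀ (by positivity) hμ1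
        _ = _ := by rw [hsq, one_mul]
    · have hRτ : R ≤ √2 * τ := by
        refine le_of_sq_le_sq ?_ (by positivity)
        rw [mul_pow, Real.sq_sqrt zero_le_two]
        linarith [pow_le_pow_left₀ hY h.le 2]
      calc (1 - Y / τ) * R ≤ (1 - Y / τ) * (√2 * τ) :=
            mul_le_mul_of_nonneg_left hRτ (sub_nonneg.2 hμ1)
        _ = √2 * (τ - Y) := by rw [sub_mul, mul_left_comm (Y / τ), hμτ]; ring
        _ ≤ √2 * (2 * η) := by gcongr; linarith
        _ = 2 * √2 * η := by ring

variable {H F : Type*} [NormedAddCommGroup H] [InnerProductSpace ℝ H] [NormedAddCommGroup F]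
  [InnerProductSpace ℝ F] {I : Type*} {e : I → H} {J : ℕ} {G T : Fin J → Finset (Finset I)}
  {k : Fin J → ℕ}

theorem levelsRestrict_sdiff_mem_convexHull (he : Orthonormal ℝ e) (hG : DisjointGroups G)
    (hk : ∀ j, 0 < k j) {x : H}
    (hT : ∀ j, IsTopSubset (G j) (k j) (fun g => ‖groupProj e g x‖) (T j)) :
    levelsRestrict e (fun j => G j \ T j) x ∈ convexHull ℝ (sparsityInLevels e G k ∩
      Metric.closedBall 0
        √(∑ j, groupNorm e (T j) x ^ 2 / k j + ∑ j, groupNorm e (G j \ T j) x ^ 2 / k j)) := by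
  have hk' : ∀ j, (0 : ℝ) < k j := fun j => Nat.cast_pos.2 (hk j)
  let r : Fin J → ℝ := fun j => √(groupNorm e (T j) x ^ 2 + groupNorm e (G j \ T j) x ^ 2)
  have hr_sq : ∀ j, r j ^ 2 = groupNorm e (T j) x ^ 2 + groupNorm e (G j \ T j) x ^ 2 :=
    fun j => Real.sq_sqrt (by positivity)
  have hle : ∀ j, ∀ g ∈ G j \ T j, ‖groupProj e g x‖ ≤ r j / k j := by
    intro j g hg
    rw [Finset.mem_sdiff] at hg
    rw [le_div_iff₀' (hk' j)]
    exact ((hT j).mul_le_sum (fun _ _ => norm_nonneg _) hg.1 hg.2).trans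
      (Real.le_sqrt_of_sq_le (le_add_of_nonneg_right (sq_nonneg _)))
  have hsum : ∀ j, groupNorm e (G j \ T j) x ≤ k j * (r j / k j) := by
    intro j
    rw [mul_div_cancel₀ _ (hk' j).ne']
    exact Real.le_sqrt_of_sq_le (le_add_of_nonneg_left (sq_nonneg _))
  have hmem := levelsRestrict_mem_convexHull he hG (fun j => Finset.sdiff_subset)
    (fun j => by positivity) hle hsum
  have hradius : ∀ j, k j * (r j / k j) ^ 2 =
      groupNorm e (T j) x ^ 2 / k j + groupNorm e (G j \ T j) x ^ 2 / k j := by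
    intro j
    rw [← add_div, ← hr_sq]
    field_simp [(hk' j).ne']
  simpa only [hradius, Finset.sum_add_distrib] using hmem

theorem sum_groupNorm_sq_div_le_norm_sq (he : Orthonormal ℝ e) (hT : DisjointGroups T)
    (hcard : ∀ j, (T j).card ≤ k j) (x : H) :
    ∑ j, groupNorm e (T j) x ^ 2 / k j ≤ ‖levelsRestrict e T x‖ ^ 2 := by
  rw [show ‖levelsRestrict e T x‖ ^ 2 = ∑ j, ∑ g ∈ T j, ‖groupProj e g x‖ ^ 2 from
    norm_sum_sum_groupProj_sq he hT fun _ _ => x]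
  refine Finset.sum_le_sum fun j _ => ?_
  refine div_le_of_le_mul₀ (Nat.cast_nonneg _) (by positivity) ?_
  calc groupNorm e (T j) x ^ 2 ≤ (T j).card * ∑ g ∈ T j, ‖groupProj e g x‖ ^ 2 :=
        sq_sum_le_card_mul_sum_sq
    _ ≤ k j * ∑ g ∈ T j, ‖groupProj e g x‖ ^ 2 := by gcongr; exact hcard j
    _ = _ := mul_comm _ _

theorem adaptedWeight_mul_sq (k : Fin J → ℕ) (j : Fin J) (a : ℝ) :
    (adaptedWeight k j * a) ^ 2 = a ^ 2 / k j := by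
  rw [adaptedWeight, mul_pow, inv_pow, Real.sq_sqrt (k j).cast_nonneg, div_eq_inv_mul]

theorem sum_groupNorm_sq_div_le_levelsNorm_sq (x : H) :
    ∑ j, groupNorm e (T j) x ^ 2 / k j ≤ levelsNorm e (adaptedWeight k) T x ^ 2 := by
  simp only [← adaptedWeight_mul_sq]
  exact Finset.sum_sq_le_sq_sum_of_nonneg fun j _ =>
    mul_nonneg (adaptedWeight_nonneg k j) (groupNorm_nonneg (T j) x)

theorem levelsNorm_sq_le_mul_sum_groupNorm_sq_div (x : H) :
    levelsNorm e (adaptedWeight k) T x ^ 2 ≤ J * ∑ j, groupNorm e (T j) x ^ 2 / k j := by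
  simp only [← adaptedWeight_mul_sq]
  simpa [levelsNorm] using sq_sum_le_card_mul_sum_sq (s := Finset.univ)
    (f := fun j => adaptedWeight k j * groupNorm e (T j) x)

theorem exists_shrink_factor_of_levelsNorm_le (he : Orthonormal ℝ e) (hT : DisjointGroups T)
    (hcard : ∀ j, (T j).card ≤ k j) {U : Fin J → Finset (Finset I)} {x : H} {η : ℝ} (hη : 0 ≤ η)
    (hUT : levelsNorm e (adaptedWeight k) U x ≤ levelsNorm e (adaptedWeight k) T x + 2 * η) :
    ∃ μ ∈ Icc (0 : ℝ) 1,
      μ * √(∑ j, groupNorm e (T j) x ^ 2 / k j + ∑ j, groupNorm e (U j) x ^ 2 / k j) ≤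
        √(1 + J) * ‖levelsRestrict e T x‖ ∧
      (1 - μ) * √(∑ j, groupNorm e (T j) x ^ 2 / k j + ∑ j, groupNorm e (U j) x ^ 2 / k j) ≤
        2 * √2 * η := by
  have hT_norm := sum_groupNorm_sq_div_le_norm_sq he hT hcard x
  have hT_levels := sum_groupNorm_sq_div_le_levelsNorm_sq (e := e) (T := T) (k := k) x
  have hU_levels := sum_groupNorm_sq_div_le_levelsNorm_sq (e := e) (T := U) (k := k) x
  refine exists_shrink_factor (levelsNorm_nonneg (adaptedWeight_nonneg k) x) (norm_nonneg _) hη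
    ?_ ?_ ((levelsNorm_sq_le_mul_sum_groupNorm_sq_div x).trans (by gcongr))
    (levelsNorm_nonneg (adaptedWeight_nonneg k) x) hUT
  all_goals
    rw [Real.sq_sqrt (by positivity)]
    gcongr

theorem levelsNorm_le_of_isTopSubset {w : Fin J → ℝ} (hw : ∀ j, 0 ≤ w j) {x : H}
    (hT : ∀ j, IsTopSubset (G j) (k j) (fun g => ‖groupProj e g x‖) (T j))
    {S : Fin J → Finset (Finset I)} (hSG : ∀ j, S j ⊆ G j) (hS : ∀ j, (S j).card ≤ k j) :
    levelsNorm e w S x ≤ levelsNorm e w T x :=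
  Finset.sum_le_sum fun j _ =>
    mul_le_mul_of_nonneg_left ((hT j).sum_le (S j) (hSG j) (hS j)) (hw j)

variable {A : H →L[ℝ] F} {δ : ℝ}

theorem norm_le_of_levelsNorm_le (he : Orthonormal ℝ e) (hG : DisjointGroups G)
    (hk : ∀ j, 0 < k j) (hA : SatisfiesRIP A (sparsityInLevels e G k) δ)
    (hδ : δ < 1 / √(1 + √(1 + J) ^ 2)) {x : H} (hx : x ∈ coveredSpan e G)
    {S : Fin J → Finset (Finset I)} (hSG : ∀ j, S j ⊆ G j) (hS : ∀ j, (S j).card ≤ k j)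
    {η : ℝ} (hη : 0 ≤ η)
    (hcone : levelsNorm e (adaptedWeight k) G x ≤
      2 * levelsNorm e (adaptedWeight k) S x + 2 * η) :
    ‖x‖ ≤ robustnessConst √(1 + J) δ * ‖A x‖ +
      (1 + √(1 + δ) * robustnessConst √(1 + J) δ) * (2 * √2 * η) := by
  choose T hT using fun j => exists_isTopSubset (G j) (k j) fun g => ‖groupProj e g x‖
  have hTG : ∀ j, T j ⊆ G j := fun j => (hT j).subset
  have hcard : ∀ j, (T j).card ≤ k j := fun j => (hT j).card_le
  have hsplit : levelsRestrict e T x + levelsRestrict e (fun j => G j \ T j) x = x :=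
    (levelsRestrict_add_levelsRestrict_sdiff hTG x).trans (levelsRestrict_eq_self he hG hx)
  have htail : levelsNorm e (adaptedWeight k) (fun j => G j \ T j) x ≤
      levelsNorm e (adaptedWeight k) T x + 2 * η := by
    linarith [levelsNorm_add_levelsNorm_sdiff (e := e) (w := adaptedWeight k) hTG x,
      levelsNorm_le_of_isTopSubset (adaptedWeight_nonneg k) hT hSG hS]
  obtain ⟨μ, hμ, hμR, hrest⟩ := exists_shrink_factor_of_levelsNorm_le he (hG.mono hTG) hcard hη
    htail
  have hbound := hA.norm_add_le_add_mul (fun _ hs a => smul_mem_sparsityInLevels hs a)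
    (Real.sqrt_nonneg _) hδ (levelsRestrict_mem_sparsityInLevels he hG hTG hcard x)
    (levelsRestrict_sdiff_mem_convexHull he hG hk hT) (inner_levelsRestrict_sdiff he hG hTG x)
    hμ hμR hrest
  rwa [hsplit] at hbound

theorem norm_sub_le_of_levelsNorm_le (he : Orthonormal ℝ e) (hG : DisjointGroups G)
    (hk : ∀ j, 0 < k j) (hA : SatisfiesRIP A (sparsityInLevels e G k) δ)
    (hδ : δ < 1 / √(1 + √(1 + J) ^ 2)) {x x' xs : H}
    (hsub : xs - x ∈ coveredSpan e G) (hx' : x' ∈ sparsityInLevels e G k)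
    (hle : levelsNorm e (adaptedWeight k) G xs ≤ levelsNorm e (adaptedWeight k) G x) :
    ‖xs - x‖ ≤ robustnessConst √(1 + J) δ * ‖A (xs - x)‖ +
      (1 + √(1 + δ) * robustnessConst √(1 + J) δ) *
        (2 * √2 * levelsNorm e (adaptedWeight k) G (x - x')) := by
  obtain ⟨S, hSG, hS, hx'S⟩ := exists_groupProj_eq_zero_of_mem_sparsityInLevels he hG hx'
  exact norm_le_of_levelsNorm_le he hG hk hA hδ hsub hSG hS
    (levelsNorm_nonneg (adaptedWeight_nonneg k) _)
    (levelsNorm_sub_le (adaptedWeight_nonneg k) hSG hx'S hle)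

end Recovery

section ExtendedNorm

variable {H F : Type*} [NormedAddCommGroup H] [InnerProductSpace ℝ H] [NormedAddCommGroup F]
  [InnerProductSpace ℝ F] {I : Type*} {e : I → H} {J : ℕ} {G : Fin J → Finset (Finset I)}
  {k : Fin J → ℕ} {w : Fin J → ℝ}

theorem fwLevels_of_mem {x : H} (hx : x ∈ coveredSpan e G) :
    fwLevels e G w x = ENNReal.ofReal (levelsNorm e w G x) :=
  if_pos hx

theorem fwLevels_of_notMem {x : H} (hx : x ∉ coveredSpan e G) :
    fwLevels e G w x = ⊤ :=
  if_neg hx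

theorem fwLevels_sub_comm (x y : H) : fwLevels e G w (x - y) = fwLevels e G w (y - x) := by
  simp only [fwLevels, sub_mem_comm_iff (a := x), groupProj_sub, norm_sub_rev]

theorem distF_fwLevels (S : Set H) (x : H) :
    distF (fwLevels e G w) S x = ⨅ x' ∈ S, fwLevels e G w (x - x') := by
  simp only [distF, fwLevels_sub_comm _ x, ENNReal.add_div, ENNReal.add_halves]

theorem ofReal_norm_sub_le_of_fwLevels_le {A : H →L[ℝ] F} {δ : ℝ} (he : Orthonormal ℝ e)
    (hG : DisjointGroups G) (hk : ∀ j, 0 < k j)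
    (hA : SatisfiesRIP A (sparsityInLevels e G k) δ) (hδ : δ < 1 / √(1 + √(1 + J) ^ 2))
    {x x' xs : H} (hx' : x' ∈ sparsityInLevels e G k)
    (hle : fwLevels e G (adaptedWeight k) xs ≤ fwLevels e G (adaptedWeight k) x) :
    ENNReal.ofReal ‖xs - x‖ ≤
      ENNReal.ofReal (robustnessConst √(1 + J) δ * ‖A (xs - x)‖) +
        ENNReal.ofReal (2 * √2 * (1 + √(1 + δ) * robustnessConst √(1 + J) δ)) *
          fwLevels e G (adaptedWeight k) (x - x') := by
  have hC := robustnessConst_nonneg (Real.sqrt_nonneg _) hδ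
  by_cases hsub : x - x' ∈ coveredSpan e G
  · have hx := (Submodule.sub_mem_iff_left _ (sparsityInLevels_subset_coveredSpan hx')).1 hsub
    have hxs : xs ∈ coveredSpan e G := by
      by_contra hxs
      simp [fwLevels_of_notMem hxs, fwLevels_of_mem hx] at hle
    rw [fwLevels_of_mem hxs, fwLevels_of_mem hx,
      ENNReal.ofReal_le_ofReal_iff (levelsNorm_nonneg (adaptedWeight_nonneg k) x)] at hle
    rw [fwLevels_of_mem hsub, ← ENNReal.ofReal_mul (by positivity),
      ← ENNReal.ofReal_add (by positivity)
        (mul_nonneg (by positivity) (levelsNorm_nonneg (adaptedWeight_nonneg k) _))]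
    refine ENNReal.ofReal_le_ofReal ((norm_sub_le_of_levelsNorm_le he hG hk hA hδ
      (Submodule.sub_mem _ hxs hx) hx' hle).trans_eq ?_)
    ring
  · have hpos : ENNReal.ofReal (2 * √2 * (1 + √(1 + δ) * robustnessConst √(1 + J) δ)) ≠ 0 :=
      (ENNReal.ofReal_pos.2 (by positivity)).ne'
    rw [fwLevels_of_notMem hsub, ENNReal.mul_top hpos, add_top]
    exact le_top

end ExtendedNorm

theorem stmt4_general {H F : Type*} [NormedAddCommGroup H] [InnerProductSpace ℝ H]
    [NormedAddCommGroup F] [InnerProductSpace ℝ F]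
    {I : Type*} {e : I → H} (he : Orthonormal ℝ e)
    {J : ℕ} {G : Fin J → Finset (Finset I)} {k : Fin J → ℕ} (hk : ∀ j, 0 < k j)
    (hG : DisjointGroups G) {A : H →L[ℝ] F} {δ : ℝ} (hδ : δ < 1 / √(2 + J))
    (hRIP : SatisfiesRIP A (sparsityInLevels e G k) δ) {C D : ℝ}
    (hC : C = (1 + √(1 + J)) * √(1 + δ) / (1 - δ * √(2 + J)))
    (hD : D = 2 * √2 * (1 + √(1 + δ) * C)) {ε : ℝ} {x xs : H} {err : F}
    (hfeas : ‖A xs - (A x + err)‖ ≤ ε)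
    (hle : fwLevels e G (adaptedWeight k) xs ≤ fwLevels e G (adaptedWeight k) x) :
    ENNReal.ofReal ‖xs - x‖ ≤ ENNReal.ofReal (C * (‖err‖ + ε)) + ENNReal.ofReal D *
      distF (fwLevels e G (adaptedWeight k)) (sparsityInLevels e G k) x := by
  have hJ : 2 + (J : ℝ) = 1 + √(1 + J) ^ 2 := by rw [Real.sq_sqrt (by positivity)]; ring
  rw [hJ] at hδ
  obtain rfl : C = robustnessConst √(1 + J) δ := by rw [hC, hJ, robustnessConst]
  have hC0 := robustnessConst_nonneg (Real.sqrt_nonneg _) hδ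
  have hD0 : 0 < D := by rw [hD]; positivity
  have hmap : ‖A (xs - x)‖ ≤ ‖err‖ + ε := by
    have hsplit : A (xs - x) = err + (A xs - (A x + err)) := by rw [map_sub]; abel
    rw [hsplit]
    exact (norm_add_le _ _).trans (add_le_add_right hfeas _)
  simp only [distF_fwLevels, ENNReal.mul_iInf_of_ne (ENNReal.ofReal_pos.2 hD0).ne'
    ENNReal.ofReal_ne_top, ENNReal.add_iInf]
  refine le_iInf₂ fun x' hx' => ?_
  rw [hD]
  refine (ofReal_norm_sub_le_of_fwLevels_le he hG hk hRIP hδ hx' hle).trans ?_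
  gcongr

/-- stable and robust recovery for structured sparsity in `J ≥ 2` levels by
minimizing the weighted group norm in levels with adapted weights `w_j = 1/√k_j`, under
the RIP with `δ < 1/√(2+J)`. -/
theorem stmt4 {H F : Type*} [NormedAddCommGroup H] [InnerProductSpace ℝ H] [CompleteSpace H]
    [NormedAddCommGroup F] [InnerProductSpace ℝ F] [CompleteSpace F]
    {I : Type*} (e : I → H) (he : Orthonormal ℝ e)
    (J : ℕ) (hJ : 2 ≤ J) (lvl : I → Fin J)
    (G : Fin J → Finset (Finset I)) (k : Fin J → ℕ) (hk : ∀ j, 0 < k j)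
    (hlvl : ∀ j, ∀ g ∈ G j, ∀ i ∈ g, lvl i = j)
    (hdisj : ∀ j, ∀ g ∈ G j, ∀ g' ∈ G j, g ≠ g' → Disjoint g g')
    (A : H →L[ℝ] F) (δ : ℝ) (hδ : δ < 1 / Real.sqrt (2 + J))
    (hRIP : SatisfiesRIP A (sparsityInLevels e G k) δ)
    (C D : ℝ)
    (hC : C = (1 + Real.sqrt (1 + J)) * Real.sqrt (1 + δ) / (1 - δ * Real.sqrt (2 + J)))
    (hD : D = 2 * Real.sqrt 2 * (1 + Real.sqrt (1 + δ) * C)) :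
    ∀ ε : ℝ, 0 ≤ ε → ∀ x : H, ∀ err : F, ‖err‖ ≤ ε → ∀ xs : H,
      (‖A xs - (A x + err)‖ ≤ ε ∧
        ∀ z : H, ‖A z - (A x + err)‖ ≤ ε →
          fwLevels e G (fun j => (Real.sqrt (k j))⁻¹) xs
            ≤ fwLevels e G (fun j => (Real.sqrt (k j))⁻¹) z) →
      ENNReal.ofReal ‖xs - x‖
        ≤ ENNReal.ofReal (C * (‖err‖ + ε)) +
          ENNReal.ofReal D *
            distF (fwLevels e G (fun j => (Real.sqrt (k j))⁻¹)) (sparsityInLevels e G k) x := by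
  intro ε _ x err herr xs ⟨hfeas, hmin⟩
  exact stmt4_general he hk (disjointGroups_of_level hlvl hdisj) hδ hRIP hC hD hfeas
    (hmin x (by simpa using herr))
end
end

section
/- Let Σ be a structured-sparsity-in-levels model in a Hilbert space H with J levels, where level j carries a k_j-group-sparse model with a finite group collection G_j whose groups have size at most d_j. Then the normalized secant set S(Σ) has upper box-counting dimension at most 2·Σ_{j=1}^J k_j·d_j; in particular it is finite. -/
noncomputable section
open scoped ENNReal NNReal Pointwise RealInnerProductSpace
open Filter Set Classical MeasureTheory ProbabilityTheory

/-- The covering number `N(S, α)`: the minimal number of closed balls of radius `α` with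
centers in `S` needed to cover `S` (`+∞` if there is no finite cover). -/
def coveringNumber {H : Type*} [NormedAddCommGroup H] (S : Set H) (α : ℝ) : ℕ∞ :=
  sInf {n : ℕ∞ | ∃ C : Set H, C ⊆ S ∧ C.Finite ∧ (C.ncard : ℕ∞) ≤ n ∧
    ∀ y ∈ S, ∃ c ∈ C, ‖y - c‖ ≤ α}

/-- `log N(S, α)`, as an extended real. -/
def logCover {H : Type*} [NormedAddCommGroup H] (S : Set H) (α : ℝ) : EReal :=
  if h : coveringNumber S α = ⊤ then ⊤
  else ((Real.log ((coveringNumber S α).untop h) : ℝ) : EReal)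

/-- The upper box-counting dimension `limsup_{α → 0⁺} log N(S,α) / log (1/α)`. -/
def boxDim {H : Type*} [NormedAddCommGroup H] (S : Set H) : EReal :=
  Filter.limsup (fun α : ℝ => logCover S α * (((Real.log (1 / α))⁻¹ : ℝ) : EReal))
    (nhdsWithin (0 : ℝ) (Set.Ioi 0))

/-!
A sparse vector in levels lies in one of the finitely many subspaces spanned by the basis vectors of
an admissible selection of groups, and each of these has dimension at most `∑ j, k j * d j`.
A normalized secant is therefore a unit vector in a sum of two of them, a subspace of at most twice
that dimension. By comparing volumes of balls, an `ε`-separated subset of the ball of radius `r` in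
dimension `n` has at most `(1 + 2 * r / ε) ^ n` points. Packing numbers, unlike internal covering
numbers, are monotone in the set; so they bound the covering number of the normalized secant set by
a constant times `ε⁻¹` to the power `2 * ∑ j, k j * d j`.
-/

section CoveringNumber

variable {E : Type*} [NormedAddCommGroup E]

theorem coveringNumber_eq_metric (S : Set E) (ε : ℝ≥0) :
    coveringNumber S ε = Metric.coveringNumber ε S := by
  refine le_antisymm (le_iInf₂ fun C hCS ↦ le_iInf fun hC ↦ ?_) (le_sInf ?_)
  · rcases C.finite_or_infinite with hfin | hinf
    · refine sInf_le ⟨C, hCS, hfin, hfin.cast_ncard_eq.le, fun y hy ↦ ?_⟩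
      obtain ⟨c, hc, hyc⟩ := hC hy
      exact ⟨c, hc, by rwa [← dist_eq_norm, dist_le_coe, ← edist_le_coe]⟩
    · exact hinf.encard_eq ▸ le_top
  · rintro n ⟨C, hCS, hfin, hcard, hC⟩
    have hcover : Metric.IsCover ε S C := fun y hy ↦ by
      obtain ⟨c, hc, hyc⟩ := hC y hy
      exact ⟨c, hc, by rwa [← dist_eq_norm, dist_le_coe, ← edist_le_coe] at hyc⟩
    exact (hcover.coveringNumber_le_encard hCS).trans (hfin.cast_ncard_eq ▸ hcard)

theorem logCover_le_log {S : Set E} {α x : ℝ} (hx : 1 ≤ x)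
    (hcover : (coveringNumber S α : ℝ≥0∞) ≤ ENNReal.ofReal x) :
    logCover S α ≤ Real.log x := by
  have hne : coveringNumber S α ≠ ⊤ :=
    ENat.toENNReal_ne_top.1 (ne_top_of_le_ne_top ENNReal.ofReal_ne_top hcover)
  obtain ⟨N, hN⟩ := ENat.ne_top_iff_exists.1 hne
  have hNx : (N : ℝ) ≤ x := by
    rw [← hN, ENat.toENNReal_coe, ← ENNReal.ofReal_natCast] at hcover
    exact (ENNReal.ofReal_le_ofReal_iff (by positivity)).1 hcover
  rw [logCover, dif_neg hne, (WithTop.untop_eq_iff hne).2 hN.symm, EReal.coe_le_coe_iff]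
  rcases N.eq_zero_or_pos with rfl | hpos
  · simpa using Real.log_nonneg hx
  · exact Real.log_le_log (Nat.cast_pos.2 hpos) hNx

theorem boxDim_le_of_eventually_coveringNumber_le {S : Set E} {C D : ℝ} (hD : 0 ≤ D)
    (hcover : ∀ᶠ α in nhdsWithin (0 : ℝ) (Ioi 0),
      (coveringNumber S α : ℝ≥0∞) ≤ ENNReal.ofReal (C * (1 / α) ^ D)) :
    boxDim S ≤ (D : EReal) := by
  have hlog : Tendsto (fun α : ℝ ↦ Real.log (1 / α)) (nhdsWithin 0 (Ioi 0)) atTop := by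
    simp only [one_div]
    exact Real.tendsto_log_atTop.comp tendsto_inv_nhdsGT_zero
  -- For `S = ∅` the covering number is `0` and `Real.log 0 = 0`, so `C` is replaced by `max C 1`.
  have hlim : Tendsto (fun α : ℝ ↦ ((Real.log (max C 1) * (Real.log (1 / α))⁻¹ + D : ℝ) : EReal))
      (nhdsWithin 0 (Ioi 0)) (nhds (D : EReal)) := by
    refine (continuous_coe_real_ereal.tendsto D).comp ?_
    simpa using (hlog.inv_tendsto_atTop.const_mul (Real.log (max C 1))).add_const D
  refine (limsup_le_limsup ?_).trans hlim.limsup_eq.le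
  filter_upwards [hcover, Ioo_mem_nhdsGT one_pos] with α hα ⟨hα0, hα1⟩
  have hinv : 1 < 1 / α := (one_lt_div hα0).2 hα1
  have hlogpos : 0 < Real.log (1 / α) := Real.log_pos hinv
  have hpow : 1 ≤ (1 / α) ^ D := Real.one_le_rpow hinv.le hD
  have hlogCover : logCover S α ≤ Real.log (max C 1 * (1 / α) ^ D) := by
    refine logCover_le_log (one_le_mul_of_one_le_of_one_le (le_max_right C 1) hpow)
      (hα.trans (ENNReal.ofReal_le_ofReal ?_))
    gcongr
    exact le_max_left C 1
  calc logCover S α * ((Real.log (1 / α))⁻¹ : ℝ)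
      ≤ (Real.log (max C 1 * (1 / α) ^ D) : EReal) * ((Real.log (1 / α))⁻¹ : ℝ) := by
        gcongr
    _ = ((Real.log (max C 1) * (Real.log (1 / α))⁻¹ + D : ℝ) : EReal) := by
        rw [← EReal.coe_mul, Real.log_mul (by positivity) (by positivity),
          Real.log_rpow (by positivity), add_mul, mul_inv_cancel_right₀ hlogpos.ne']

end CoveringNumber

section PackingNumber

theorem packingNumber_mono_set {X : Type*} [PseudoEMetricSpace X] {ε : ℝ≥0} {A B : Set X}
    (hAB : A ⊆ B) : Metric.packingNumber ε A ≤ Metric.packingNumber ε B :=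
  iSup₂_le fun _ hC ↦ iSup_le fun hsep ↦ hsep.encard_le_packingNumber (hC.trans hAB)

theorem packingNumber_biUnion_le {X ι : Type*} [PseudoEMetricSpace X] (ε : ℝ≥0) (s : Finset ι)
    (A : ι → Set X) :
    Metric.packingNumber ε (⋃ i ∈ s, A i) ≤ ∑ i ∈ s, Metric.packingNumber ε (A i) := by
  refine iSup₂_le fun C hC ↦ iSup_le fun hsep ↦ ?_
  calc C.encard = (⋃ i ∈ s, C ∩ A i).encard := by
        rw [← inter_iUnion₂, inter_eq_left.2 hC]
    _ ≤ ∑ i ∈ s, (C ∩ A i).encard := s.set_encard_biUnion_le _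
    _ ≤ ∑ i ∈ s, Metric.packingNumber ε (A i) := Finset.sum_le_sum fun i _ ↦
        (hsep.subset inter_subset_left).encard_le_packingNumber inter_subset_right

theorem packingNumber_image_le_of_isometry {X Y : Type*} [EMetricSpace X] [PseudoEMetricSpace Y]
    {f : X → Y} (hf : Isometry f) (ε : ℝ≥0) (A : Set X) :
    Metric.packingNumber ε (f '' A) ≤ Metric.packingNumber ε A := by
  refine iSup₂_le fun C hC ↦ iSup_le fun hsep ↦ ?_
  obtain ⟨B, hBA, rfl⟩ := subset_image_iff.1 hC
  exact encard_image_le f B |>.trans <| Metric.IsSeparated.encard_le_packingNumber hBA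
    fun x hx y hy hxy ↦ by
      simpa only [hf.edist_eq] using
        hsep (mem_image_of_mem f hx) (mem_image_of_mem f hy) (hf.injective.ne hxy)

variable {E : Type*} [NormedAddCommGroup E]

theorem encard_mul_measure_ball_le_of_isSeparated [MeasurableSpace E] [BorelSpace E]
    (μ : Measure E) [μ.IsAddHaarMeasure] {ε : ℝ≥0} {x : E} {r : ℝ} {C : Set E}
    (hC : C ⊆ Metric.closedBall x r) (hsep : Metric.IsSeparated ε C) :
    (C.encard : ℝ≥0∞) * μ (Metric.ball 0 (ε / 2)) ≤ μ (Metric.ball x (r + ε / 2)) := by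
  have hdisj : Pairwise (Function.onFun Disjoint fun c : C ↦ Metric.ball (c : E) (ε / 2)) := by
    intro c c' hne
    refine Metric.ball_disjoint_ball ?_
    have hdist : (ε : ℝ≥0∞) < edist (c : E) c' := hsep c.2 c'.2 (Subtype.coe_ne_coe.2 hne)
    rw [edist_nndist, ENNReal.coe_lt_coe] at hdist
    rw [add_halves, ← coe_nndist]
    exact hdist.le
  calc (C.encard : ℝ≥0∞) * μ (Metric.ball 0 (ε / 2))
      = ∑' c : C, μ (Metric.ball (c : E) (ε / 2)) := by
        simp only [μ.addHaar_ball_center, ENNReal.tsum_set_const]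
    _ ≤ μ (⋃ c : C, Metric.ball (c : E) (ε / 2)) :=
        tsum_meas_le_meas_iUnion_of_disjoint μ (fun _ ↦ measurableSet_ball) hdisj
    _ ≤ μ (Metric.ball x (r + ε / 2)) := measure_mono <| iUnion_subset fun c ↦
        Metric.ball_subset_ball' (by linarith [Metric.mem_closedBall.1 (hC c.2)])

theorem packingNumber_mul_measure_ball_le [MeasurableSpace E] [BorelSpace E] (μ : Measure E)
    [μ.IsAddHaarMeasure] (ε : ℝ≥0) (x : E) (r : ℝ) :
    (Metric.packingNumber ε (Metric.closedBall x r) : ℝ≥0∞) * μ (Metric.ball 0 (ε / 2)) ≤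
      μ (Metric.ball x (r + ε / 2)) := by
  simp only [Metric.packingNumber, ENat.toENNReal_iSup, ENNReal.iSup_mul]
  exact iSup₂_le fun C hC ↦ iSup_le fun hsep ↦
    encard_mul_measure_ball_le_of_isSeparated μ hC hsep

variable [NormedSpace ℝ E]

theorem packingNumber_closedBall_le [FiniteDimensional ℝ E] {ε : ℝ≥0} (hε : 0 < ε) (x : E)
    {r : ℝ} (hr : 0 ≤ r) :
    (Metric.packingNumber ε (Metric.closedBall x r) : ℝ≥0∞) ≤
      ENNReal.ofReal ((1 + 2 * r / ε) ^ Module.finrank ℝ E) := by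
  borelize E
  let μ : Measure E := Measure.addHaar
  have hε2 : (0 : ℝ) < ε / 2 := by positivity
  refine (ENNReal.mul_le_mul_iff_left (Metric.measure_ball_pos μ 0 hε2).ne'
    measure_ball_lt_top.ne).1 ?_
  calc (Metric.packingNumber ε (Metric.closedBall x r) : ℝ≥0∞) * μ (Metric.ball 0 (ε / 2))
      ≤ μ (Metric.ball x (r + ε / 2)) := packingNumber_mul_measure_ball_le μ ε x r
    _ = μ (Metric.ball x ((1 + 2 * r / ε) * (ε / 2))) := by
        congr 2
        field_simp
        ring
    _ = ENNReal.ofReal ((1 + 2 * r / ε) ^ Module.finrank ℝ E) * μ (Metric.ball 0 (ε / 2)) :=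
        μ.addHaar_ball_mul_of_pos x (by positivity) _

theorem packingNumber_submodule_inter_closedBall_le (V : Submodule ℝ E) [FiniteDimensional ℝ V]
    {ε : ℝ≥0} (hε : 0 < ε) {r : ℝ} (hr : 0 ≤ r) :
    (Metric.packingNumber ε ((V : Set E) ∩ Metric.closedBall 0 r) : ℝ≥0∞) ≤
      ENNReal.ofReal ((1 + 2 * r / ε) ^ Module.finrank ℝ V) := by
  have himage : (V : Set E) ∩ Metric.closedBall 0 r = (↑) '' Metric.closedBall (0 : V) r := by
    ext y
    simp [and_comm]
  rw [himage]
  exact (ENat.toENNReal_mono (packingNumber_image_le_of_isometry isometry_subtype_coe ε _)).trans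
    (packingNumber_closedBall_le hε 0 hr)

end PackingNumber

section UnionOfSubspaces

variable {E ι : Type*} [NormedAddCommGroup E] [NormedSpace ℝ E] {s : Finset ι}
  {V : ι → Submodule ℝ E}

theorem norm_eq_one_of_mem_normSecant {S : Set E} {z : E} (hz : z ∈ normSecant S) : ‖z‖ = 1 := by
  obtain ⟨y, -, hy, rfl⟩ := hz
  exact norm_smul_inv_norm (𝕜 := ℝ) hy

theorem isBounded_normSecant (S : Set E) : Bornology.IsBounded (normSecant S) :=
  isBounded_iff_forall_norm_le.2 ⟨1, fun _ hz ↦ (norm_eq_one_of_mem_normSecant hz).le⟩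

theorem normSecant_subset_biUnion_sup {S : Set E} (hS : S ⊆ ⋃ i ∈ s, (V i : Set E)) :
    normSecant S ⊆ ⋃ p ∈ s ×ˢ s, ((V p.1 ⊔ V p.2 : Submodule ℝ E) : Set E) := by
  rintro _ ⟨_, ⟨x, hx, y, hy, rfl⟩, -, rfl⟩
  obtain ⟨i, hi, hxi⟩ := mem_iUnion₂.1 (hS hx)
  obtain ⟨j, hj, hyj⟩ := mem_iUnion₂.1 (hS hy)
  exact mem_iUnion₂.2 ⟨(i, j), Finset.mk_mem_product hi hj,
    Submodule.smul_mem _ _ (sub_mem (Submodule.mem_sup_left hxi) (Submodule.mem_sup_right hyj))⟩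

variable [∀ i, FiniteDimensional ℝ (V i)] {D : ℕ}

theorem coveringNumber_le_of_subset_biUnion_submodule (hV : ∀ i ∈ s, Module.finrank ℝ (V i) ≤ D)
    {S : Set E} (hS : S ⊆ ⋃ i ∈ s, (V i : Set E)) {r : ℝ} (hr : 0 ≤ r)
    (hSr : S ⊆ Metric.closedBall 0 r) {ε : ℝ≥0} (hε : 0 < ε) :
    (Metric.coveringNumber ε S : ℝ≥0∞) ≤ ENNReal.ofReal (s.card * (1 + 2 * r / ε) ^ D) := by
  have hsub : S ⊆ ⋃ i ∈ s, (V i : Set E) ∩ Metric.closedBall 0 r :=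
    (subset_inter hS hSr).trans (iUnion₂_inter _ _).subset
  have hpacking : Metric.coveringNumber ε S ≤
      ∑ i ∈ s, Metric.packingNumber ε ((V i : Set E) ∩ Metric.closedBall 0 r) :=
    (Metric.coveringNumber_le_packingNumber ε S).trans <|
      (packingNumber_mono_set hsub).trans (packingNumber_biUnion_le ε s _)
  calc (Metric.coveringNumber ε S : ℝ≥0∞)
      ≤ ∑ i ∈ s, (Metric.packingNumber ε ((V i : Set E) ∩ Metric.closedBall 0 r) : ℝ≥0∞) :=
        (ENat.toENNReal_mono hpacking).trans (map_sum ENat.toENNRealRingHom _ s).le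
    _ ≤ ∑ i ∈ s, ENNReal.ofReal ((1 + 2 * r / ε) ^ D) := by
        refine Finset.sum_le_sum fun i hi ↦
          (packingNumber_submodule_inter_closedBall_le (V i) hε hr).trans
            (ENNReal.ofReal_le_ofReal (pow_le_pow_right₀ ?_ (hV i hi)))
        exact le_add_of_nonneg_right (by positivity)
    _ = ENNReal.ofReal (s.card * (1 + 2 * r / ε) ^ D) := by
        rw [Finset.sum_const, nsmul_eq_mul, ENNReal.ofReal_mul (by positivity),
          ENNReal.ofReal_natCast]

theorem boxDim_le_of_subset_biUnion_submodule (hV : ∀ i ∈ s, Module.finrank ℝ (V i) ≤ D)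
    {S : Set E} (hS : S ⊆ ⋃ i ∈ s, (V i : Set E)) (hbdd : Bornology.IsBounded S) :
    boxDim S ≤ ((D : ℝ) : EReal) := by
  obtain ⟨r, hr, hSr⟩ := hbdd.subset_closedBall_lt 0 0
  refine boxDim_le_of_eventually_coveringNumber_le (C := s.card * (1 + 2 * r) ^ D)
    D.cast_nonneg ?_
  filter_upwards [Ioo_mem_nhdsGT one_pos] with α ⟨hα0, hα1⟩
  lift α to ℝ≥0 using hα0.le
  rw [coveringNumber_eq_metric]
  refine (coveringNumber_le_of_subset_biUnion_submodule hV hS hr.le hSr hα0).trans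
    (ENNReal.ofReal_le_ofReal ?_)
  have hscale : 1 + 2 * r / α ≤ (1 + 2 * r) * (1 / α) := by
    rw [mul_one_div, add_div]
    gcongr
    exact (one_le_div hα0).2 hα1.le
  rw [Real.rpow_natCast, mul_assoc, ← mul_pow]
  gcongr

theorem boxDim_normSecant_le_of_subset_biUnion_submodule
    (hV : ∀ i ∈ s, Module.finrank ℝ (V i) ≤ D) {S : Set E} (hS : S ⊆ ⋃ i ∈ s, (V i : Set E)) :
    boxDim (normSecant S) ≤ ((2 * D : ℝ) : EReal) := by
  have hsup : ∀ p ∈ s ×ˢ s, Module.finrank ℝ (V p.1 ⊔ V p.2 : Submodule ℝ E) ≤ 2 * D := by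
    intro p hp
    obtain ⟨hp1, hp2⟩ := Finset.mem_product.1 hp
    have hadd := Submodule.finrank_add_le_finrank_add_finrank (V p.1) (V p.2)
    linarith [hV p.1 hp1, hV p.2 hp2]
  simpa using boxDim_le_of_subset_biUnion_submodule hsup (normSecant_subset_biUnion_sup hS)
    (isBounded_normSecant S)

end UnionOfSubspaces

section SparsityInLevels

variable {H I : Type*} [NormedAddCommGroup H] [InnerProductSpace ℝ H] {J : ℕ}

/-- The admissible choices `T = (T_1, …, T_J)` of at most `k j` groups from `G j` in each level. -/
def groupSelections (G : Fin J → Finset (Finset I)) (k : Fin J → ℕ) :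
    Finset (Fin J → Finset (Finset I)) :=
  Fintype.piFinset fun j ↦ (G j).powerset.filter fun T ↦ T.card ≤ k j

/-- The set of all indices occurring in a group of some level of the selection `T`. -/
def selectionSupport (T : Fin J → Finset (Finset I)) : Finset I :=
  Finset.univ.biUnion fun j ↦ (T j).biUnion id

/-- The subspace of vectors supported on the groups of `T`, so that the model is covered by the
subspaces of its admissible selections. -/
def selectionSpan (e : I → H) (T : Fin J → Finset (Finset I)) : Submodule ℝ H :=
  Submodule.span ℝ ((selectionSupport T).image e)

instance (e : I → H) (T : Fin J → Finset (Finset I)) :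
    FiniteDimensional ℝ (selectionSpan e T) :=
  FiniteDimensional.span_finset ℝ _

theorem card_selectionSupport_le {G : Fin J → Finset (Finset I)} {k d : Fin J → ℕ}
    (hd : ∀ j, ∀ g ∈ G j, g.card ≤ d j) {T : Fin J → Finset (Finset I)}
    (hT : T ∈ groupSelections G k) : (selectionSupport T).card ≤ ∑ j, k j * d j := by
  refine Finset.card_biUnion_le.trans (Finset.sum_le_sum fun j _ ↦ ?_)
  obtain ⟨hTG, hTk⟩ := Finset.mem_filter.1 (Fintype.mem_piFinset.1 hT j)
  exact (Finset.card_biUnion_le_card_mul _ _ (d j) fun g hg ↦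
    hd j g (Finset.mem_powerset.1 hTG hg)).trans (Nat.mul_le_mul_right _ hTk)

theorem groupRestrict_mem_selectionSpan (e : I → H) (T : Fin J → Finset (Finset I)) (j : Fin J)
    (x : H) : groupRestrict e (T j) x ∈ selectionSpan e T := by
  refine sum_mem fun g hg ↦ sum_mem fun i hi ↦ Submodule.smul_mem _ _ (Submodule.subset_span ?_)
  exact Finset.mem_image_of_mem e <|
    Finset.mem_biUnion.2 ⟨j, Finset.mem_univ j, Finset.mem_biUnion.2 ⟨g, hg, hi⟩⟩

theorem sparsityInLevels_subset_biUnion_selectionSpan (e : I → H) (G : Fin J → Finset (Finset I))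
    (k : Fin J → ℕ) :
    sparsityInLevels e G k ⊆ ⋃ T ∈ groupSelections G k, (selectionSpan e T : Set H) := by
  rintro _ ⟨c, hc, rfl⟩
  choose T hTG hTk hTc using hc
  have hT : T ∈ groupSelections G k := Fintype.mem_piFinset.2 fun j ↦
    Finset.mem_filter.2 ⟨Finset.mem_powerset.2 (hTG j), hTk j⟩
  refine mem_iUnion₂.2 ⟨T, hT, sum_mem fun j _ ↦ ?_⟩
  rw [hTc j]
  exact groupRestrict_mem_selectionSpan e T j (c j)

end SparsityInLevels

theorem ereal_coe_sum {ι : Type*} (s : Finset ι) (f : ι → ℝ) :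
    ((∑ i ∈ s, f i : ℝ) : EReal) = ∑ i ∈ s, (f i : EReal) :=
  map_sum (⟨⟨Real.toEReal, EReal.coe_zero⟩, EReal.coe_add⟩ : ℝ →+ EReal) f s

theorem stmt7_general {H : Type*} [NormedAddCommGroup H] [InnerProductSpace ℝ H]
    {I : Type*} (e : I → H) {J : ℕ} (G : Fin J → Finset (Finset I)) (k d : Fin J → ℕ)
    (hd : ∀ j, ∀ g ∈ G j, g.card ≤ d j) :
    boxDim (normSecant (sparsityInLevels e G k))
        ≤ (((2 : ℝ) * ∑ j, (k j : ℝ) * (d j : ℝ)) : EReal) ∧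
    boxDim (normSecant (sparsityInLevels e G k)) < ⊤ := by
  have hdim : ∀ T ∈ groupSelections G k,
      Module.finrank ℝ (selectionSpan e T) ≤ ∑ j, k j * d j := fun T hT ↦
    (finrank_span_finset_le_card _).trans <|
      Finset.card_image_le.trans (card_selectionSupport_le hd hT)
  have hbox := boxDim_normSecant_le_of_subset_biUnion_submodule hdim
    (sparsityInLevels_subset_biUnion_selectionSpan e G k)
  refine ⟨hbox.trans_eq ?_, hbox.trans_lt (EReal.coe_lt_top _)⟩
  simp only [Nat.cast_sum, Nat.cast_mul, EReal.coe_mul, ereal_coe_sum]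

/-- the normalized secant set of a structured-sparsity-in-levels model has
upper box-counting dimension at most `2·Σ_j k_j d_j`; in particular it is finite. -/
theorem stmt7 {H : Type*} [NormedAddCommGroup H] [InnerProductSpace ℝ H] [CompleteSpace H]
    {I : Type*} (e : I → H) (he : Orthonormal ℝ e)
    (J : ℕ) (lvl : I → Fin J)
    (G : Fin J → Finset (Finset I)) (k d : Fin J → ℕ)
    (hlvl : ∀ j, ∀ g ∈ G j, ∀ i ∈ g, lvl i = j)
    (hdisj : ∀ j, ∀ g ∈ G j, ∀ g' ∈ G j, g ≠ g' → Disjoint g g')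
    (hd : ∀ j, ∀ g ∈ G j, g.card ≤ d j) :
    boxDim (normSecant (sparsityInLevels e G k))
        ≤ (((2 : ℝ) * ∑ j, (k j : ℝ) * (d j : ℝ)) : EReal) ∧
    boxDim (normSecant (sparsityInLevels e G k)) < ⊤ := by
  exact stmt7_general e G k d hd
end
end
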